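/- Consider ℤ_q-synchronization on a uniformly random simple k-regular graph on n vertices, and define k_*(p;q) := 2 log q / [ (1 − p + p/q)·log(p + q(1−p)) + (1 − 1/q)·p·log p ]. If k > k_*(p;q), then there exist δ, c₀ > 0 depending only on (k,p,q) such that, with probability at least 1 − c₀⁻¹ exp(−c₀ (log n)²), d_TV( ω̂_{θ̂,θ₀}, ν̄×ν̄ ) ≥ δ, where θ̂ is any estimator outputting an element of Θ(η_n;G_n,Y) whenever nonempty. Furthermore, there exist C > 0 and p₀ ∈ (0,1) such that for all p ∈ (p₀,1): | k_*(p;q) − 4 log q / ((q−1)(1−p)²) | ≤ C·(1−p)⁻¹. -/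

import Mathlib

open MeasureTheory ProbabilityTheory Filter
open scoped ENNReal Classical

noncomputable section

/-- `g` is the adjacency function of a simple `k`-regular graph on `Fin n`. -/
def IsRegAdj (n k : ℕ) (g : Fin n → Fin n → Bool) : Prop :=
  (∀ u v, g u v = g v u) ∧ (∀ u, g u u = false) ∧
    ∀ u, (Finset.univ.filter fun v => g u v = true).card = k

/-- The edges of such a graph, each with its canonical orientation. -/
def edgesOf {n : ℕ} (g : Fin n → Fin n → Bool) : Finset (Fin n × Fin n) :=
  Finset.univ.filter fun e => e.1 < e.2 ∧ g e.1 e.2 = true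

/-- A probability space carrying a random graph on `n` vertices, labels, edge
observations and auxiliary uniform random variables for the side information. -/
structure RegSpace (X Y' : Type*) (n : ℕ) where
  Ω : Type
  mΩ : MeasurableSpace Ω
  P : @Measure Ω mΩ
  θ0 : Ω → Fin n → X
  G : Ω → Fin n → Fin n → Bool
  Yobs : Fin n × Fin n → Ω → Y'
  U : Ω → Fin n → ℝ

attribute [instance] RegSpace.mΩ

/-- `M` carries the observation model with kernel `Q` on a uniformly random simple
`k`-regular graph on `n` (labelled) vertices: the graph is uniform among `k`-regular
graphs, the labels are i.i.d. uniform and independent of the graph, and conditionally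
on graph and labels the edge observations are independent with law `Q(·|θ_u,θ_v)`. -/
def RegSpace.IsRegModel {X Y' : Type*} [Fintype X] [Fintype Y'] (Q : X → X → Y' → ℝ)
    (k : ℕ) {n : ℕ} (M : RegSpace X Y' n) : Prop :=
  IsProbabilityMeasure M.P ∧
  (∀ v, @Measurable _ _ M.mΩ ⊤ (fun ω => M.θ0 ω v)) ∧
  (@Measurable _ _ M.mΩ ⊤ M.G) ∧
  (∀ e, @Measurable _ _ M.mΩ ⊤ (M.Yobs e)) ∧
  (∀ v, @Measurable _ _ M.mΩ inferInstance (fun ω => M.U ω v)) ∧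
  (M.P {ω | IsRegAdj n k (M.G ω)} = 1) ∧
  (∀ g : Fin n → Fin n → Bool, IsRegAdj n k g →
    ∀ (σ : Fin n → X) (F : Finset (Fin n × Fin n)), (∀ e ∈ F, e ∈ edgesOf g) →
    ∀ y : Fin n × Fin n → Y',
      (M.P {ω | M.G ω = g ∧ M.θ0 ω = σ ∧ ∀ e ∈ F, M.Yobs e ω = y e}).toReal
        = (Nat.card {g' : Fin n → Fin n → Bool // IsRegAdj n k g'} : ℝ)⁻¹ *
          ((Fintype.card X : ℝ)⁻¹) ^ n * ∏ e ∈ F, Q (σ e.1) (σ e.2) (y e))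

/-- The auxiliary variables `U` are i.i.d. uniform on [0,1] and independent of
everything else. -/
def RegSpace.HasUniformSide {X Y' : Type*} {n : ℕ} (M : RegSpace X Y' n) : Prop :=
  ∀ (T : Finset (Fin n)) (a : Fin n → ℝ), (∀ v, a v ∈ Set.Icc (0:ℝ) 1) →
    ∀ A : Set ((Fin n → X) × (Fin n → Fin n → Bool) × (Fin n × Fin n → Y')),
      (M.P {ω | (∀ v ∈ T, M.U ω v ≤ a v) ∧
          (M.θ0 ω, M.G ω, fun e => M.Yobs e ω) ∈ A}).toReal
        = (∏ v ∈ T, a v) *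
          (M.P {ω | (M.θ0 ω, M.G ω, fun e => M.Yobs e ω) ∈ A}).toReal

variable {X Y' : Type*}

/-- Edge empirical distribution of a configuration and observations. -/
def empEdge [Fintype X] [Fintype Y'] {n : ℕ} (g : Fin n → Fin n → Bool) (θ : Fin n → X)
    (y : Fin n × Fin n → Y') (x1 x2 : X) (b : Y') : ℝ :=
  ((edgesOf g).card : ℝ)⁻¹ *
    (((edgesOf g).filter fun e => θ e.1 = x1 ∧ θ e.2 = x2 ∧ y e = b).card : ℝ)

/-- The reference edge distribution ν̄_e(x₁,x₂,y) = ν̄(x₁)ν̄(x₂)Q(y|x₁,x₂). -/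
def nuBarE [Fintype X] (Q : X → X → Y' → ℝ) (x1 x2 : X) (b : Y') : ℝ :=
  (Fintype.card X : ℝ)⁻¹ * (Fintype.card X : ℝ)⁻¹ * Q x1 x2 b

/-- Total variation distance between the edge empirical distribution and ν̄_e. -/
def dTVedge [Fintype X] [Fintype Y'] {n : ℕ} (Q : X → X → Y' → ℝ)
    (g : Fin n → Fin n → Bool) (θ : Fin n → X) (y : Fin n × Fin n → Y') : ℝ :=
  (2:ℝ)⁻¹ * ∑ x1, ∑ x2, ∑ b, |empEdge g θ y x1 x2 b - nuBarE Q x1 x2 b|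

/-- η_n = (log n)/√n. -/
def ηseq (n : ℕ) : ℝ := Real.log n / Real.sqrt n

/-- The typical set Θ(η;G,Y). -/
def typicalSet [Fintype X] [Fintype Y'] {n : ℕ} (Q : X → X → Y' → ℝ) (η : ℝ)
    (g : Fin n → Fin n → Bool) (y : Fin n × Fin n → Y') : Set (Fin n → X) :=
  {θ | dTVedge Q g θ y ≤ η}

/-- Joint vertex empirical distribution of two configurations. -/
def empVert [Fintype X] {n : ℕ} (a b : Fin n → X) (x1 x2 : X) : ℝ :=
  (n : ℝ)⁻¹ * ((Finset.univ.filter fun u => a u = x1 ∧ b u = x2).card : ℝ)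

/-- Total variation distance between the joint vertex empirical distribution and
ν̄ × ν̄. -/
def dTVvert [Fintype X] {n : ℕ} (a b : Fin n → X) : ℝ :=
  (2:ℝ)⁻¹ * ∑ x1, ∑ x2,
    |empVert a b x1 x2 - (Fintype.card X : ℝ)⁻¹ * (Fintype.card X : ℝ)⁻¹|

/-- The σ-algebra generated by the graph and the edge observations. -/
def RegSpace.obsAlg {n : ℕ} (M : RegSpace X Y' n) : MeasurableSpace M.Ω :=
  MeasurableSpace.comap
    (fun ω => (M.G ω,
      fun e => if e ∈ edgesOf (M.G ω) then some (M.Yobs e ω) else none)) ⊤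

/-- An admissible estimator: a function of (G,Y) outputting a typical configuration
whenever one exists. -/
def IsTypEstimator [Fintype X] [Fintype Y'] (Q : X → X → Y' → ℝ) {n : ℕ}
    (M : RegSpace X Y' n) (θhat : M.Ω → Fin n → X) : Prop :=
  (@Measurable _ _ M.obsAlg ⊤ θhat) ∧
  ∀ ω, (typicalSet Q (ηseq n) (M.G ω) (fun e => M.Yobs e ω)).Nonempty →
    θhat ω ∈ typicalSet Q (ηseq n) (M.G ω) (fun e => M.Yobs e ω)

/-- The ℤ_q-synchronization kernel: Y = θ_u - θ_v with probability 1-p, uniform noise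
with probability p. -/
def Qsync (q : ℕ) [NeZero q] (p : ℝ) (x1 x2 y : ZMod q) : ℝ :=
  (1 - p) * (if y = x1 - x2 then (1:ℝ) else 0) + p / q

/-- The threshold k_*(p;q). -/
def kstar (p : ℝ) (q : ℕ) : ℝ :=
  2 * Real.log q /
    ((1 - p + p / q) * Real.log (p + q * (1 - p)) + (1 - 1 / (q : ℝ)) * p * Real.log p)

/-! ### Configurations: ordered pairings of half-edges -/

/-- Bijections between the `2 * m` ends of `m` ordered edge slots and the `n * k` half-edges. -/
abbrev Config (n k m : ℕ) := (Fin m × Bool) ≃ (Fin n × Fin k)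

/-- The other end of an edge slot. -/
def flipSlot {m : ℕ} (s : Fin m × Bool) : Fin m × Bool := (s.1, !s.2)

@[simp] lemma flipSlot_flipSlot {m : ℕ} (s : Fin m × Bool) : flipSlot (flipSlot s) = s := by
  simp [flipSlot]

@[simp] lemma flipSlot_fst {m : ℕ} (s : Fin m × Bool) : (flipSlot s).1 = s.1 := rfl

lemma flipSlot_ne {m : ℕ} (s : Fin m × Bool) : flipSlot s ≠ s := by
  intro h
  simpa [flipSlot] using congrArg Prod.snd h

/-- The unordered edge carried by a slot. -/
def slotEdge {n k m : ℕ} (σ : Config n k m) (i : Fin m) : Sym2 (Fin n) :=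
  s((σ (i, false)).1, (σ (i, true)).1)

lemma slotEdge_eq {n k m : ℕ} (σ : Config n k m) (s : Fin m × Bool) :
    slotEdge σ s.1 = s((σ s).1, (σ (flipSlot s)).1) := by
  obtain ⟨i, b⟩ := s
  cases b
  · rfl
  · exact Sym2.eq_swap

/-- The indices of loops and of parallel edges in a family of edges. -/
def badSet {V : Type*} {m : ℕ} (E : Fin m → Sym2 V) : Finset (Fin m) :=
  Finset.univ.filter fun i => (E i).IsDiag ∨ ∃ j, j ≠ i ∧ E j = E i

lemma badSet_update {V : Type*} {m : ℕ} (E : Fin m → Sym2 V) {i j : Fin m} {e f : Sym2 V}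
    (hij : i ≠ j) (he : ¬ e.IsDiag) (hf : ¬ f.IsDiag) (hef : e ≠ f)
    (heE : ∀ l, E l ≠ e) (hfE : ∀ l, E l ≠ f) :
    badSet (Function.update (Function.update E i e) j f) ⊆ (badSet E).erase i := by
  intro l hl
  simp only [badSet, Finset.mem_filter, Finset.mem_univ, true_and, Finset.mem_erase] at hl ⊢
  simp only [Function.update_apply] at hl
  grind

/-- The slot ends attached to the vertex `a`. -/
def slotsAt {n k m : ℕ} (σ : Config n k m) (a : Fin n) : Finset (Fin m × Bool) :=
  Finset.univ.filter fun t => (σ t).1 = a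

lemma card_slotsAt {n k m : ℕ} (σ : Config n k m) (a : Fin n) : (slotsAt σ a).card = k := by
  have : slotsAt σ a = (Finset.univ : Finset (Fin k)).image fun i => σ.symm (a, i) := by
    ext t
    simp only [slotsAt, Finset.mem_filter, Finset.mem_univ, true_and, Finset.mem_image]
    constructor
    · rintro rfl
      exact ⟨(σ t).2, by simp⟩
    · rintro ⟨i, rfl⟩
      simp
  rw [this, Finset.card_image_of_injective, Finset.card_univ, Fintype.card_fin]
  intro i j h
  simpa using h

/-- The slot ends attached to the vertex `a` or to one of its neighbours. -/
def slotsNear {n k m : ℕ} (σ : Config n k m) (a : Fin n) : Finset (Fin m × Bool) :=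
  Finset.univ.filter fun t => (σ t).1 = a ∨ ∃ s, (σ s).1 = a ∧ (σ (flipSlot s)).1 = (σ t).1

lemma card_slotsNear_le {n k m : ℕ} (σ : Config n k m) (a : Fin n) :
    (slotsNear σ a).card ≤ k + k * k := by
  have hsub : slotsNear σ a ⊆
      slotsAt σ a ∪ (slotsAt σ a).biUnion fun s => slotsAt σ (σ (flipSlot s)).1 := by
    intro t ht
    simp only [slotsNear, slotsAt, Finset.mem_filter, Finset.mem_univ, true_and,
      Finset.mem_union, Finset.mem_biUnion] at ht ⊢
    exact ht.imp_right fun ⟨s, h1, h2⟩ => ⟨s, h1, h2.symm⟩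
  refine (Finset.card_le_card hsub).trans ((Finset.card_union_le _ _).trans ?_)
  rw [card_slotsAt]
  gcongr
  refine Finset.card_biUnion_le.trans ?_
  simp [card_slotsAt]

lemma exists_mem_slotsNear_swap {n k m : ℕ} (σ : Config n k m) (j : Fin m)
    (hj : j ∈ badSet (slotEdge σ)) :
    ∃ s, ∀ t, t ∉ ({(j, false), s, flipSlot s} : Finset (Fin m × Bool)) →
      t ∈ slotsNear ((Equiv.swap (j, true) t).trans σ)
        (((Equiv.swap (j, true) t).trans σ) (j, false)).1 := by
  simp only [badSet, Finset.mem_filter, Finset.mem_univ, true_and] at hj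
  rcases hj with h | ⟨i, hij, h⟩
  · refine ⟨(j, false), fun t ht => ?_⟩
    simp only [Finset.mem_insert, Finset.mem_singleton, not_or] at ht
    have h1 : Equiv.swap (j, true) t (j, false) = (j, false) :=
      Equiv.swap_apply_of_ne_of_ne (by simp) (Ne.symm ht.1)
    simp only [slotsNear, Finset.mem_filter, Finset.mem_univ, true_and, Equiv.trans_apply, h1,
      Equiv.swap_apply_right]
    left
    simpa [slotEdge, eq_comm] using h
  · have : ∃ s : Fin m × Bool, s.1 = i ∧ (σ s).1 = (σ (j, false)).1 ∧
        (σ (flipSlot s)).1 = (σ (j, true)).1 := by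
      rw [slotEdge, slotEdge, Sym2.eq_iff] at h
      rcases h with h | h
      · exact ⟨(i, false), rfl, h.1, h.2⟩
      · exact ⟨(i, true), rfl, h.2, h.1⟩
    obtain ⟨s, hs, h1, h2⟩ := this
    refine ⟨s, fun t ht => ?_⟩
    simp only [Finset.mem_insert, Finset.mem_singleton, not_or] at ht
    have e1 : Equiv.swap (j, true) t (j, false) = (j, false) :=
      Equiv.swap_apply_of_ne_of_ne (by simp) (Ne.symm ht.1)
    have e2 : Equiv.swap (j, true) t s = s :=
      Equiv.swap_apply_of_ne_of_ne (by rintro rfl; exact hij hs.symm) (Ne.symm ht.2.1)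
    have e3 : Equiv.swap (j, true) t (flipSlot s) = flipSlot s :=
      Equiv.swap_apply_of_ne_of_ne
        (fun hh => hij (by rw [← hs, ← flipSlot_fst, hh])) (Ne.symm ht.2.2)
    simp only [slotsNear, Finset.mem_filter, Finset.mem_univ, true_and, Equiv.trans_apply, e1,
      Equiv.swap_apply_right]
    exact Or.inr ⟨s, by rw [e2, h1], by rw [e3, h2]⟩

/-- Precomposition with a transposition, as a permutation of configurations. -/
def swapConfig {n k m : ℕ} (s t : Fin m × Bool) : Config n k m ≃ Config n k m where
  toFun σ := (Equiv.swap s t).trans σ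
  invFun σ := (Equiv.swap s t).trans σ
  left_inv σ := by ext x <;> simp
  right_inv σ := by ext x <;> simp

lemma card_bad_index_le {n k m : ℕ} (j : Fin m) :
    (2 * m - 3) * (Finset.univ.filter fun σ : Config n k m => j ∈ badSet (slotEdge σ)).card
      ≤ (k + k * k) * Fintype.card (Config n k m) := by
  set near : Fin m × Bool → Config n k m → ℕ := fun t σ =>
    if t ∈ slotsNear σ (σ (j, false)).1 then 1 else 0 with hnear
  have h1 : (2 * m - 3) *
      (Finset.univ.filter fun σ : Config n k m => j ∈ badSet (slotEdge σ)).card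
      ≤ ∑ σ : Config n k m, ∑ t, near t (swapConfig (j, true) t σ) := by
    rw [mul_comm, ← smul_eq_mul, ← Finset.sum_const, Finset.sum_filter]
    refine Finset.sum_le_sum fun σ _ => ?_
    split_ifs with hσ
    · obtain ⟨s, hs⟩ := exists_mem_slotsNear_swap σ j hσ
      have hsub : ({(j, false), s, flipSlot s} : Finset (Fin m × Bool))ᶜ ⊆
          Finset.univ.filter fun t => t ∈ slotsNear (swapConfig (j, true) t σ)
            ((swapConfig (j, true) t σ) (j, false)).1 := by
        intro t ht
        exact Finset.mem_filter.2 ⟨Finset.mem_univ _, hs t (Finset.mem_compl.1 ht)⟩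
      have hc := Finset.card_le_card hsub
      rw [Finset.card_compl, Fintype.card_prod, Fintype.card_fin, Fintype.card_bool] at hc
      simp only [hnear, Finset.sum_boole, Nat.cast_id]
      have h3 := Finset.card_le_three (a := (j, false)) (b := s) (c := flipSlot s)
      omega
    · exact Nat.zero_le _
  refine h1.trans ?_
  rw [Finset.sum_comm]
  have h2 : ∀ t, ∑ σ : Config n k m, near t (swapConfig (j, true) t σ) = ∑ σ, near t σ :=
    fun t => Equiv.sum_comp (swapConfig (j, true) t) (near t)
  simp only [h2]
  rw [Finset.sum_comm, mul_comm, ← smul_eq_mul, Fintype.card, ← Finset.sum_const]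
  refine Finset.sum_le_sum fun σ _ => ?_
  simp only [hnear, Finset.sum_boole, Nat.cast_id]
  refine le_trans (Finset.card_le_card ?_) (card_slotsNear_le σ (σ (j, false)).1)
  intro t
  simp

lemma sum_card_badSet_le {n k m : ℕ} (hm : 3 ≤ m) :
    ∑ σ : Config n k m, (badSet (slotEdge σ)).card
      ≤ (k + k * k) * Fintype.card (Config n k m) := by
  have h1 : ∑ σ : Config n k m, (badSet (slotEdge σ)).card =
      ∑ j : Fin m, (Finset.univ.filter fun σ : Config n k m => j ∈ badSet (slotEdge σ)).card := by
    have := Finset.sum_card_bipartiteAbove_eq_sum_card_bipartiteBelow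
      (s := (Finset.univ : Finset (Config n k m))) (t := (Finset.univ : Finset (Fin m)))
      (fun σ j => j ∈ badSet (slotEdge σ))
    simpa [Finset.bipartiteAbove, Finset.bipartiteBelow] using this
  have h2 : m * ∑ σ : Config n k m, (badSet (slotEdge σ)).card
      ≤ m * ((k + k * k) * Fintype.card (Config n k m)) := by
    rw [h1, Finset.mul_sum]
    calc _ ≤ ∑ _j : Fin m, (k + k * k) * Fintype.card (Config n k m) := by
          refine Finset.sum_le_sum fun j _ => ?_
          exact (Nat.mul_le_mul_right _ (by omega)).trans (card_bad_index_le j)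
      _ = _ := by simp
  exact Nat.le_of_mul_le_mul_left h2 (by omega)

/-- The configurations with at most `b` bad slots. -/
def fewBad (n k m b : ℕ) : Finset (Config n k m) :=
  Finset.univ.filter fun σ => (badSet (slotEdge σ)).card ≤ b

lemma card_config_le_two_mul_fewBad {n k m : ℕ} (hm : 3 ≤ m) :
    Fintype.card (Config n k m) ≤ 2 * (fewBad n k m (2 * (k + k * k))).card := by
  have h := sum_card_badSet_le (n := n) (k := k) hm
  set K := k + k * k
  have hc := Finset.card_filter_add_card_filter_not (s := (Finset.univ : Finset (Config n k m)))
    (fun σ => (badSet (slotEdge σ)).card ≤ 2 * K)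
  have h2 : (Finset.univ.filter fun σ : Config n k m =>
      ¬ (badSet (slotEdge σ)).card ≤ 2 * K).card * (2 * K + 1)
      ≤ ∑ σ : Config n k m, (badSet (slotEdge σ)).card := by
    rw [← smul_eq_mul, ← Finset.sum_const]
    refine le_trans (Finset.sum_le_sum fun σ hσ => ?_)
      (Finset.sum_le_sum_of_subset (Finset.filter_subset _ _))
    simpa [Nat.succ_le_iff] using hσ
  rw [Finset.card_univ] at hc
  change (fewBad n k m (2 * K)).card + _ = _ at hc
  by_contra hlt
  push Not at hlt
  nlinarith

lemma exists_swap_badSet_lt {n k m : ℕ} (σ : Config n k m)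
    (hpos : 0 < (badSet (slotEdge σ)).card)
    (hN : 3 * k + 2 * (k * k) + 2 * (badSet (slotEdge σ)).card < 2 * m) :
    ∃ s t, (badSet (slotEdge (swapConfig s t σ))).card < (badSet (slotEdge σ)).card := by
  obtain ⟨j, hj⟩ := Finset.card_pos.1 hpos
  set B := badSet (slotEdge σ) with hB
  set a := (σ (j, false)).1 with ha
  set b := (σ (j, true)).1 with hb
  set forb : Finset (Fin m × Bool) := slotsNear σ a ∪ slotsAt σ b ∪
    (slotsNear σ b).image flipSlot ∪ B ×ˢ Finset.univ with hforb
  have hcard : forb.card < (Finset.univ : Finset (Fin m × Bool)).card := by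
    have h1 := card_slotsNear_le σ a
    have h2 := card_slotsNear_le σ b
    have h3 := card_slotsAt σ b
    have h4 : ((slotsNear σ b).image flipSlot).card ≤ _ := Finset.card_image_le
    have h5 : (B ×ˢ (Finset.univ : Finset Bool)).card = B.card * 2 := by
      rw [Finset.card_product]; rfl
    have h6 : (Finset.univ : Finset (Fin m × Bool)).card = m * 2 := by simp
    have h7 : forb.card ≤ (slotsNear σ a).card + (slotsAt σ b).card +
        ((slotsNear σ b).image flipSlot).card + (B ×ˢ (Finset.univ : Finset Bool)).card :=
      (Finset.card_union_le _ _).trans (Nat.add_le_add_right ((Finset.card_union_le _ _).trans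
        (Nat.add_le_add_right (Finset.card_union_le _ _) _)) _)
    rw [h6]
    omega
  obtain ⟨t, -, ht⟩ := Finset.exists_mem_notMem_of_card_lt_card hcard
  simp only [hforb, Finset.mem_union, not_or] at ht
  obtain ⟨⟨⟨ht1, ht2⟩, ht3⟩, ht4⟩ := ht
  have ht3' : flipSlot t ∉ slotsNear σ b := fun h =>
    ht3 (Finset.mem_image.2 ⟨_, h, flipSlot_flipSlot t⟩)
  have ht4' : t.1 ∉ B := fun h => ht4 (by simp [h])
  have htj : t.1 ≠ j := fun h => ht4' (h ▸ hj)
  simp only [slotsNear, slotsAt, Finset.mem_filter, Finset.mem_univ, true_and, not_or,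
    not_exists, not_and] at ht1 ht2 ht3'
  have hloop : (σ t).1 ≠ (σ (flipSlot t)).1 := fun h => ht4' (by
    simp only [hB, badSet, Finset.mem_filter, Finset.mem_univ, true_and]
    left
    rw [slotEdge_eq, h]
    simp)
  have hedge : slotEdge (swapConfig (j, true) t σ) =
      Function.update (Function.update (slotEdge σ) j s(a, (σ t).1)) t.1
        s((σ (flipSlot t)).1, b) := by
    funext i
    by_cases hit : i = t.1
    · subst hit
      rw [Function.update_self, slotEdge_eq]
      have e1 : Equiv.swap (j, true) t (flipSlot t) = flipSlot t :=
        Equiv.swap_apply_of_ne_of_ne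
          (fun h => htj (by rw [← flipSlot_fst, h])) (flipSlot_ne t)
      simp only [swapConfig, Equiv.coe_fn_mk, Equiv.trans_apply, Equiv.swap_apply_right, e1]
      exact Sym2.eq_swap
    · rw [Function.update_of_ne hit]
      by_cases hij : i = j
      · subst hij
        rw [Function.update_self]
        have e1 : Equiv.swap (i, true) t (i, false) = (i, false) :=
          Equiv.swap_apply_of_ne_of_ne (by simp) (by rintro rfl; exact htj rfl)
        simp only [slotEdge, swapConfig, Equiv.coe_fn_mk, Equiv.trans_apply,
          Equiv.swap_apply_left, e1, ha]
      · rw [Function.update_of_ne hij]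
        have e1 : ∀ c, Equiv.swap (j, true) t (i, c) = (i, c) := fun c =>
          Equiv.swap_apply_of_ne_of_ne (by simp [hij]) (by rintro rfl; exact hit rfl)
        simp only [slotEdge, swapConfig, Equiv.coe_fn_mk, Equiv.trans_apply, e1]
  have hnear : ∀ l x y, slotEdge σ l = s(x, y) →
      ∃ s, (σ s).1 = x ∧ (σ (flipSlot s)).1 = y := by
    intro l x y h
    rw [slotEdge, Sym2.eq_iff] at h
    rcases h with h | h
    · exact ⟨(l, false), h.1, h.2⟩
    · exact ⟨(l, true), h.2, h.1⟩
  have hsub := badSet_update (slotEdge σ) (i := j) (j := t.1) (e := s(a, (σ t).1))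
    (f := s((σ (flipSlot t)).1, b)) (Ne.symm htj)
    (by simpa [eq_comm] using ht1.1)
    (by simpa using ht3'.1)
    (by
      intro h
      rw [Sym2.eq_iff] at h
      rcases h with h | h
      · exact ht2 h.2
      · exact hloop h.2)
    (by
      intro l hl
      obtain ⟨s, h1, h2⟩ := hnear l _ _ hl
      exact ht1.2 s h1 h2)
    (by
      intro l hl
      obtain ⟨s, h1, h2⟩ := hnear l b (σ (flipSlot t)).1 (hl.trans Sym2.eq_swap)
      exact ht3'.2 s h1 h2)
  refine ⟨(j, true), t, ?_⟩
  rw [hedge]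
  exact (Finset.card_le_card hsub).trans_lt (Finset.card_erase_lt_of_mem hj)

lemma card_fewBad_succ_le {n k m b : ℕ} (hN : 3 * k + 2 * (k * k) + 2 * (b + 1) < 2 * m) :
    (fewBad n k m (b + 1)).card ≤ (1 + (2 * m) ^ 2) * (fewBad n k m b).card := by
  have hsub : fewBad n k m (b + 1) ⊆ fewBad n k m b ∪
      (Finset.univ : Finset ((Fin m × Bool) × (Fin m × Bool))).biUnion fun p =>
        (fewBad n k m b).image (swapConfig p.1 p.2) := by
    intro σ hσ
    simp only [fewBad, Finset.mem_union, Finset.mem_filter, Finset.mem_univ, true_and,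
      Finset.mem_biUnion, Finset.mem_image] at hσ ⊢
    by_cases h : (badSet (slotEdge σ)).card ≤ b
    · exact Or.inl h
    · right
      obtain ⟨s, t, hst⟩ := exists_swap_badSet_lt σ (by omega) (by omega)
      refine ⟨(s, t), swapConfig s t σ, by omega, ?_⟩
      exact (swapConfig s t).left_inv σ
  refine (Finset.card_le_card hsub).trans ((Finset.card_union_le _ _).trans ?_)
  have h1 : ((Finset.univ : Finset ((Fin m × Bool) × (Fin m × Bool))).biUnion fun p =>
      (fewBad n k m b).image (swapConfig p.1 p.2)).card ≤ (2 * m) ^ 2 * (fewBad n k m b).card := by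
    refine (Finset.card_biUnion_le_card_mul _ _ (fewBad n k m b).card
      fun p _ => Finset.card_image_le).trans (le_of_eq ?_)
    rw [Finset.card_univ, Fintype.card_prod, Fintype.card_prod, Fintype.card_fin,
      Fintype.card_bool]
    ring
  rw [add_mul, one_mul]
  omega

/-- Simple configurations make up a polynomial fraction of all configurations. -/
lemma card_config_le_poly_mul_simple {n k m : ℕ} (hm : 3 ≤ m)
    (hN : 3 * k + 2 * (k * k) + 4 * (k + k * k) < 2 * m) :
    Fintype.card (Config n k m) ≤
      2 * (1 + (2 * m) ^ 2) ^ (2 * (k + k * k)) * (fewBad n k m 0).card := by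
  have h : ∀ b, b ≤ 2 * (k + k * k) →
      (fewBad n k m b).card ≤ (1 + (2 * m) ^ 2) ^ b * (fewBad n k m 0).card := by
    intro b
    induction b with
    | zero => intro _; simp
    | succ b ih =>
      intro hb
      refine (card_fewBad_succ_le (by omega)).trans ?_
      exact (Nat.mul_le_mul_left _ (ih (by omega))).trans_eq (by ring)
  refine (card_config_le_two_mul_fewBad hm).trans ?_
  rw [mul_assoc]
  exact Nat.mul_le_mul_left _ (h _ le_rfl)

/-! ### From configurations to regular graphs -/

/-- The oriented edge seen from a slot end. -/
def endPair {n k m : ℕ} (σ : Config n k m) (s : Fin m × Bool) : Fin n × Fin n :=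
  ((σ s).1, (σ (flipSlot s)).1)

lemma endPair_flipSlot {n k m : ℕ} (σ : Config n k m) (s : Fin m × Bool) :
    endPair σ (flipSlot s) = (endPair σ s).swap := by
  simp [endPair]

/-- The configurations which are simple with underlying graph `g`. -/
def graphFiber {n : ℕ} (k m : ℕ) (g : Fin n → Fin n → Bool) : Finset (Config n k m) :=
  Finset.univ.filter fun σ => Function.Injective (endPair σ) ∧
    ∀ u v, g u v = true ↔ ∃ s, endPair σ s = (u, v)

lemma endPair_injective_of_mem_fewBad {n k m : ℕ} {σ : Config n k m}
    (hσ : σ ∈ fewBad n k m 0) : Function.Injective (endPair σ) := by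
  have hbad : ∀ i, i ∉ badSet (slotEdge σ) := by
    simp only [fewBad, Finset.mem_filter, Finset.mem_univ, true_and, Nat.le_zero,
      Finset.card_eq_zero] at hσ
    simp [hσ]
  simp only [badSet, Finset.mem_filter, Finset.mem_univ, true_and, not_or, not_exists,
    not_and] at hbad
  intro s t hst
  simp only [endPair, Prod.mk.injEq] at hst
  have h1 : s.1 = t.1 := by
    by_contra hne
    refine (hbad t.1).2 s.1 hne ?_
    rw [slotEdge_eq, slotEdge_eq, hst.1, hst.2]
  obtain ⟨i, b⟩ := s
  obtain ⟨j, c⟩ := t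
  obtain rfl : i = j := h1
  have h2 := (hbad i).1
  simp only [slotEdge, Sym2.mk_isDiag_iff] at h2
  cases b <;> cases c <;> simp_all [flipSlot]

lemma exists_regular_of_mem_fewBad {n k m : ℕ} {σ : Config n k m}
    (hσ : σ ∈ fewBad n k m 0) : ∃ g, IsRegAdj n k g ∧ σ ∈ graphFiber k m g := by
  have hinj := endPair_injective_of_mem_fewBad hσ
  refine ⟨fun u v => decide (∃ s, endPair σ s = (u, v)), ⟨?_, ?_, ?_⟩, ?_⟩
  · intro u v
    have h : ∀ u v, (∃ s, endPair σ s = (u, v)) → ∃ s, endPair σ s = (v, u) := by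
      rintro u v ⟨s, hs⟩
      exact ⟨flipSlot s, by rw [endPair_flipSlot, hs]; rfl⟩
    exact decide_eq_decide.2 ⟨h u v, h v u⟩
  · intro u
    simp only [decide_eq_false_iff_not]
    rintro ⟨s, hs⟩
    refine flipSlot_ne s (hinj ?_)
    rw [endPair_flipSlot, hs]
    rfl
  · intro u
    refine Eq.trans (Eq.symm ?_) (card_slotsAt σ u)
    refine Finset.card_bij (fun s _ => (endPair σ s).2) ?_ ?_ ?_
    · intro s hs
      simp only [slotsAt, Finset.mem_filter, Finset.mem_univ, true_and] at hs
      simp only [Finset.mem_filter, Finset.mem_univ, true_and, decide_eq_true_eq]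
      exact ⟨s, Prod.ext hs rfl⟩
    · intro s hs t ht hst
      simp only [slotsAt, Finset.mem_filter, Finset.mem_univ, true_and] at hs ht
      exact hinj (Prod.ext (hs.trans ht.symm) hst)
    · intro v hv
      simp only [Finset.mem_filter, Finset.mem_univ, true_and, decide_eq_true_eq] at hv
      obtain ⟨s, hs⟩ := hv
      refine ⟨s, ?_, by rw [hs]⟩
      simp only [slotsAt, Finset.mem_filter, Finset.mem_univ, true_and]
      exact congrArg Prod.fst hs
  · exact Finset.mem_filter.2 ⟨Finset.mem_univ _, hinj, fun u v => decide_eq_true_iff⟩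

lemma graphFiber_disjoint {n k m : ℕ} {g g' : Fin n → Fin n → Bool} {σ : Config n k m}
    (h : σ ∈ graphFiber k m g) (h' : σ ∈ graphFiber k m g') : g = g' := by
  simp only [graphFiber, Finset.mem_filter, Finset.mem_univ, true_and] at h h'
  funext u v
  exact Bool.eq_iff_iff.2 ((h.2 u v).trans (h'.2 u v).symm)

/-- The oriented edges of a graph. -/
def dartsOf {n : ℕ} (g : Fin n → Fin n → Bool) : Finset (Fin n × Fin n) :=
  Finset.univ.filter fun d => g d.1 d.2 = true

lemma mem_dartsOf {n : ℕ} {g : Fin n → Fin n → Bool} {d : Fin n × Fin n} :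
    d ∈ dartsOf g ↔ g d.1 d.2 = true := by simp [dartsOf]

lemma mem_edgesOf {n : ℕ} {g : Fin n → Fin n → Bool} {d : Fin n × Fin n} :
    d ∈ edgesOf g ↔ d.1 < d.2 ∧ g d.1 d.2 = true := by simp [edgesOf]

lemma sum_dartsOf {n k : ℕ} {g : Fin n → Fin n → Bool} (hg : IsRegAdj n k g)
    (f : Fin n × Fin n → ℕ) (hf : ∀ d, f d.swap = f d) :
    ∑ d ∈ dartsOf g, f d = 2 * ∑ e ∈ edgesOf g, f e := by
  rw [← Finset.sum_filter_add_sum_filter_not (dartsOf g) (fun d => d.1 < d.2), two_mul]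
  congr 1
  · refine Finset.sum_congr ?_ fun _ _ => rfl
    ext d
    simp only [Finset.mem_filter, mem_dartsOf, mem_edgesOf]
    tauto
  · refine Finset.sum_bij (fun d _ => d.swap) ?_ ?_ ?_ ?_
    · intro d hd
      simp only [Finset.mem_filter, mem_dartsOf, mem_edgesOf, not_lt] at hd ⊢
      refine ⟨lt_of_le_of_ne hd.2 fun h => ?_, by
        rw [Prod.fst_swap, Prod.snd_swap, hg.1]; exact hd.1⟩
      have := hd.1
      simp only [Prod.fst_swap, Prod.snd_swap] at h
      rw [h, hg.2.1] at this
      simp at this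
    · intro d _ d' _ h
      exact Prod.swap_injective h
    · intro e he
      simp only [mem_edgesOf] at he
      refine ⟨e.swap, ?_, Prod.swap_swap e⟩
      simp only [Finset.mem_filter, mem_dartsOf, Prod.fst_swap, Prod.snd_swap, not_lt]
      exact ⟨by rw [hg.1]; exact he.2, he.1.le⟩
    · intro d _
      exact (hf d).symm

lemma two_mul_card_edgesOf {n k : ℕ} {g : Fin n → Fin n → Bool} (hg : IsRegAdj n k g) :
    2 * (edgesOf g).card = n * k := by
  have h := sum_dartsOf hg (fun _ => 1) (fun _ => rfl)
  rw [Finset.sum_const, Finset.sum_const, smul_eq_mul, smul_eq_mul, mul_one, mul_one] at h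
  rw [← h, dartsOf, Finset.card_filter, Fintype.sum_prod_type]
  simp only [← Finset.card_filter, hg.2.2]
  simp

lemma sum_edgesOf_of_mem_graphFiber {n k m : ℕ} {g : Fin n → Fin n → Bool}
    (hg : IsRegAdj n k g) {σ : Config n k m} (hσ : σ ∈ graphFiber k m g)
    (f : Fin n × Fin n → ℕ) (hf : ∀ d, f d.swap = f d) :
    ∑ e ∈ edgesOf g, f e = ∑ i, f (endPair σ (i, false)) := by
  simp only [graphFiber, Finset.mem_filter, Finset.mem_univ, true_and] at hσ
  have h1 : ∑ d ∈ dartsOf g, f d = ∑ s, f (endPair σ s) := by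
    have : dartsOf g = Finset.univ.image (endPair σ) := by
      ext ⟨u, v⟩
      simp [mem_dartsOf, hσ.2]
    rw [this, Finset.sum_image hσ.1.injOn]
  have h2 : ∑ s, f (endPair σ s) = 2 * ∑ i, f (endPair σ (i, false)) := by
    rw [Fintype.sum_prod_type, Finset.mul_sum]
    refine Finset.sum_congr rfl fun i _ => ?_
    rw [Fintype.sum_bool, two_mul]
    congr 1
    rw [← hf]
    rfl
  rw [sum_dartsOf hg f hf, h2] at h1
  omega

/-- A bijection between the oriented edges of two graphs which respects reversal. -/
lemma exists_dartEquiv_swap {n k : ℕ} {g g' : Fin n → Fin n → Bool} (hg : IsRegAdj n k g)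
    (hg' : IsRegAdj n k g') : ∃ α : dartsOf g ≃ dartsOf g',
      ∀ d d' : dartsOf g, d'.1 = d.1.swap → (α d').1 = (α d).1.swap := by
  have hc : (edgesOf g).card = (edgesOf g').card := by
    have h1 := two_mul_card_edgesOf hg
    have h2 := two_mul_card_edgesOf hg'
    omega
  have e : edgesOf g ≃ edgesOf g' := Finset.equivOfCardEq hc
  have key : ∀ {g g' : Fin n → Fin n → Bool}, IsRegAdj n k g → IsRegAdj n k g' →
      ∀ e : edgesOf g ≃ edgesOf g', ∃ f : dartsOf g → dartsOf g',
        (∀ (d : dartsOf g) (h : d.1 ∈ edgesOf g), (f d).1 = (e ⟨d.1, h⟩).1) ∧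
        (∀ (d : dartsOf g) (h : d.1.swap ∈ edgesOf g), (f d).1 = (e ⟨d.1.swap, h⟩).1.swap) := by
    intro g g' hg hg' e
    have hex : ∀ d : dartsOf g, ∃ x : dartsOf g',
        (∀ h : d.1 ∈ edgesOf g, x.1 = (e ⟨d.1, h⟩).1) ∧
        (∀ h : d.1.swap ∈ edgesOf g, x.1 = (e ⟨d.1.swap, h⟩).1.swap) := by
      rintro ⟨d, hd⟩
      rw [mem_dartsOf] at hd
      rcases lt_trichotomy d.1 d.2 with h | h | h
      · have h1 : d ∈ edgesOf g := mem_edgesOf.2 ⟨h, hd⟩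
        refine ⟨⟨(e ⟨d, h1⟩).1, mem_dartsOf.2 (mem_edgesOf.1 (e ⟨d, h1⟩).2).2⟩,
          fun _ => rfl, fun h2 => ?_⟩
        exact absurd (mem_edgesOf.1 h2).1 (not_lt.2 h.le)
      · rw [h, hg.2.1] at hd
        simp at hd
      · have h1 : d.swap ∈ edgesOf g :=
          mem_edgesOf.2 ⟨h, by rw [Prod.fst_swap, Prod.snd_swap, hg.1]; exact hd⟩
        refine ⟨⟨(e ⟨d.swap, h1⟩).1.swap, mem_dartsOf.2 ?_⟩, fun h2 => ?_, fun _ => rfl⟩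
        · rw [Prod.fst_swap, Prod.snd_swap, hg'.1]
          exact (mem_edgesOf.1 (e ⟨d.swap, h1⟩).2).2
        · exact absurd (mem_edgesOf.1 h2).1 (not_lt.2 h.le)
    choose f hf1 hf2 using hex
    exact ⟨f, hf1, hf2⟩
  have cases : ∀ {g : Fin n → Fin n → Bool}, IsRegAdj n k g → ∀ d : dartsOf g,
      d.1 ∈ edgesOf g ∨ d.1.swap ∈ edgesOf g := by
    intro g hg d
    have hd := mem_dartsOf.1 d.2
    rcases lt_trichotomy d.1.1 d.1.2 with h | h | h
    · exact Or.inl (mem_edgesOf.2 ⟨h, hd⟩)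
    · rw [h, hg.2.1] at hd
      simp at hd
    · exact Or.inr (mem_edgesOf.2 ⟨h, by rw [Prod.fst_swap, Prod.snd_swap, hg.1]; exact hd⟩)
  obtain ⟨f, hf1, hf2⟩ := key hg hg' e
  obtain ⟨f', hf1', hf2'⟩ := key hg' hg e.symm
  have inv : ∀ {g g' : Fin n → Fin n → Bool} (_ : IsRegAdj n k g)
      (e : edgesOf g ≃ edgesOf g') (f : dartsOf g → dartsOf g') (f' : dartsOf g' → dartsOf g)
      (_ : ∀ (d : dartsOf g) (h : d.1 ∈ edgesOf g), (f d).1 = (e ⟨d.1, h⟩).1)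
      (_ : ∀ (d : dartsOf g) (h : d.1.swap ∈ edgesOf g), (f d).1 = (e ⟨d.1.swap, h⟩).1.swap)
      (_ : ∀ (d : dartsOf g') (h : d.1 ∈ edgesOf g'), (f' d).1 = (e.symm ⟨d.1, h⟩).1)
      (_ : ∀ (d : dartsOf g') (h : d.1.swap ∈ edgesOf g'),
        (f' d).1 = (e.symm ⟨d.1.swap, h⟩).1.swap),
      Function.LeftInverse f' f := by
    intro g g' hg e f f' hf1 hf2 hf1' hf2' d
    apply Subtype.ext
    rcases cases hg d with h | h
    · have h1 := hf1 d h
      have h2 : (f d).1 ∈ edgesOf g' := h1 ▸ (e ⟨d.1, h⟩).2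
      rw [hf1' (f d) h2]
      have : (⟨(f d).1, h2⟩ : edgesOf g') = e ⟨d.1, h⟩ := Subtype.ext h1
      rw [this, Equiv.symm_apply_apply]
    · have h1 := hf2 d h
      have h3 : (f d).1.swap = (e ⟨d.1.swap, h⟩).1 := by rw [h1, Prod.swap_swap]
      have h2 : (f d).1.swap ∈ edgesOf g' := h3 ▸ (e ⟨d.1.swap, h⟩).2
      rw [hf2' (f d) h2]
      have : (⟨(f d).1.swap, h2⟩ : edgesOf g') = e ⟨d.1.swap, h⟩ := Subtype.ext h3
      rw [this, Equiv.symm_apply_apply, Prod.swap_swap]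
  refine ⟨⟨f, f', inv hg e f f' hf1 hf2 hf1' hf2',
    inv hg' e.symm f' f hf1' hf2' hf1 hf2⟩, ?_⟩
  rintro ⟨d, hd⟩ ⟨d', hd'⟩ h
  obtain rfl : d' = d.swap := h
  change (f _).1 = (f _).1.swap
  rcases cases hg ⟨d, hd⟩ with h | h
  · rw [hf1 ⟨d, hd⟩ h, hf2 ⟨d.swap, hd'⟩ (by simpa using h)]
    simp
  · rw [hf2 ⟨d, hd⟩ h, hf1 ⟨d.swap, hd'⟩ h]
    simp

/-- A bijection between the oriented edges of two graphs which respects the origin. -/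
lemma exists_dartEquiv_fst {n k : ℕ} {g g' : Fin n → Fin n → Bool} (hg : IsRegAdj n k g)
    (hg' : IsRegAdj n k g') : ∃ β : dartsOf g ≃ dartsOf g', ∀ d, (β d).1.1 = d.1.1 := by
  have b : ∀ u, {v // g u v = true} ≃ {v // g' u v = true} := fun u =>
    Fintype.equivOfCardEq (by
      rw [Fintype.card_subtype, Fintype.card_subtype]
      convert (hg.2.2 u).trans (hg'.2.2 u).symm)
  refine ⟨⟨fun d => ⟨(d.1.1, (b d.1.1 ⟨d.1.2, mem_dartsOf.1 d.2⟩).1),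
      mem_dartsOf.2 (b d.1.1 ⟨d.1.2, mem_dartsOf.1 d.2⟩).2⟩,
    fun d => ⟨(d.1.1, ((b d.1.1).symm ⟨d.1.2, mem_dartsOf.1 d.2⟩).1),
      mem_dartsOf.2 ((b d.1.1).symm ⟨d.1.2, mem_dartsOf.1 d.2⟩).2⟩, ?_, ?_⟩, fun d => rfl⟩
  · intro d
    simp
  · intro d
    simp

lemma card_graphFiber_le {n k m : ℕ} {g g' : Fin n → Fin n → Bool} (hg : IsRegAdj n k g)
    (hg' : IsRegAdj n k g') : (graphFiber k m g).card ≤ (graphFiber k m g').card := by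
  obtain ⟨α, hα⟩ := exists_dartEquiv_swap hg hg'
  obtain ⟨β, hβ⟩ := exists_dartEquiv_fst hg hg'
  have hD : ∀ σ : graphFiber k m g, ∃ D : (Fin m × Bool) ≃ dartsOf g,
      ∀ s, (D s).1 = endPair σ.1 s := by
    rintro ⟨σ, hσ⟩
    simp only [graphFiber, Finset.mem_filter, Finset.mem_univ, true_and] at hσ
    refine ⟨Equiv.ofBijective
      (fun s => ⟨endPair σ s, mem_dartsOf.2 ((hσ.2 _ _).2 ⟨s, rfl⟩)⟩) ⟨?_, ?_⟩, fun s => rfl⟩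
    · intro s t h
      exact hσ.1 (congrArg Subtype.val h)
    · rintro ⟨⟨u, v⟩, hd⟩
      obtain ⟨s, hs⟩ := (hσ.2 u v).1 (mem_dartsOf.1 hd)
      exact ⟨s, Subtype.ext hs⟩
  choose D hD using hD
  have hβ' : ∀ d, (β.symm d).1.1 = d.1.1 := fun d => by
    rw [← hβ, Equiv.apply_symm_apply]
  set Φ : graphFiber k m g → Config n k m := fun σ =>
    (((D σ).trans α).trans β.symm).trans ((D σ).symm.trans σ.1) with hΦ
  have hL : ∀ σ d, (((D σ).symm.trans σ.1) d).1 = d.1.1 := by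
    intro σ d
    obtain ⟨s, rfl⟩ := (D σ).surjective d
    rw [hD]
    simp [endPair]
  have hfst : ∀ σ s, (Φ σ s).1 = (α (D σ s)).1.1 := by
    intro σ s
    rw [← hβ', ← hL σ]
    rfl
  have hend : ∀ σ s, endPair (Φ σ) s = (α (D σ s)).1 := by
    intro σ s
    refine Prod.ext (hfst σ s) ?_
    change (Φ σ (flipSlot s)).1 = _
    rw [hfst, hα (D σ s) (D σ (flipSlot s)) (by rw [hD, hD, endPair_flipSlot])]
    rfl
  have hmem : ∀ σ, Φ σ ∈ graphFiber k m g' := by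
    intro σ
    simp only [graphFiber, Finset.mem_filter, Finset.mem_univ, true_and]
    refine ⟨fun s t h => ?_, fun u v => ⟨fun h => ?_, ?_⟩⟩
    · rw [hend, hend] at h
      exact (D σ).injective (α.injective (Subtype.ext h))
    · obtain ⟨d, hd⟩ := α.surjective ⟨(u, v), mem_dartsOf.2 h⟩
      obtain ⟨s, rfl⟩ := (D σ).surjective d
      exact ⟨s, by rw [hend, hd]⟩
    · rintro ⟨s, hs⟩
      rw [hend] at hs
      have := mem_dartsOf.1 (α (D σ s)).2
      rwa [hs] at this
  have hinj : Function.Injective fun σ => (⟨Φ σ, hmem σ⟩ : graphFiber k m g') := by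
    intro σ τ h
    have h0 : Φ σ = Φ τ := congrArg Subtype.val h
    have h1 : D σ = D τ := by
      ext1 s
      apply α.injective
      apply Subtype.ext
      rw [← hend, ← hend, h0]
    apply Subtype.ext
    apply Equiv.ext
    intro s
    obtain ⟨t, ht⟩ := (((D σ).trans α).trans β.symm).surjective (D σ s)
    have h2 : Φ σ t = σ.1 s := by
      change ((D σ).symm.trans σ.1) ((((D σ).trans α).trans β.symm) t) = _
      rw [ht]
      simp
    have h3 : Φ τ t = τ.1 s := by
      change ((D τ).symm.trans τ.1) ((((D τ).trans α).trans β.symm) t) = _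
      rw [← h1, ht]
      simp
    rw [← h2, ← h3, h0]
  simpa using Fintype.card_le_of_injective _ hinj

lemma card_graphFiber_eq {n k m : ℕ} {g g' : Fin n → Fin n → Bool} (hg : IsRegAdj n k g)
    (hg' : IsRegAdj n k g') : (graphFiber k m g).card = (graphFiber k m g').card :=
  le_antisymm (card_graphFiber_le hg hg') (card_graphFiber_le hg' hg)

/-! ### First moments over configurations and regular graphs -/

lemma card_equiv_comp_eq_le {S H X : Type*} [Fintype S] [DecidableEq S] [Fintype H]
    [DecidableEq H] [Fintype X]
    (κ : H → X) (c : S → X) :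
    (Finset.univ.filter fun σ : S ≃ H => κ ∘ σ = c).card
      ≤ ∏ x, (Finset.univ.filter fun h => κ h = x).card.factorial := by
  rcases (Finset.univ.filter fun σ : S ≃ H => κ ∘ σ = c).eq_empty_or_nonempty with h | ⟨σ₀, h₀⟩
  · rw [h]
    exact Nat.zero_le _
  · have hst := DomMulAct.stabilizer_card κ
    simp only [Fintype.card_subtype] at hst
    rw [← hst]
    refine Finset.card_le_card_of_injOn (fun σ => σ₀.symm.trans σ) ?_ ?_
    · intro σ hσ
      simp only [Finset.coe_filter, Finset.mem_univ, true_and, Set.mem_ofPred_eq,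
        Finset.mem_filter] at hσ h₀ ⊢
      funext h
      have := congrFun (hσ.trans h₀.symm) (σ₀.symm h)
      simpa using this
    · intro σ _ τ _ h
      ext s
      have := congrArg (fun e => e (σ₀ s)) h
      simpa using this

lemma sum_equiv_prod_le {H X : Type*} [Fintype H] [DecidableEq H] [Fintype X] {m : ℕ}
    (κ : H → X) (w : X → X → ℝ) (hw : ∀ x y, 0 ≤ w x y) :
    ∑ σ : (Fin m × Bool) ≃ H, ∏ i, w (κ (σ (i, false))) (κ (σ (i, true)))
      ≤ (∏ x, ((Finset.univ.filter fun h => κ h = x).card.factorial : ℝ)) *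
        (∑ x, ∑ y, w x y) ^ m := by
  have h1 : ∑ σ : (Fin m × Bool) ≃ H, ∏ i, w (κ (σ (i, false))) (κ (σ (i, true)))
      = ∑ c : Fin m × Bool → X, ∑ σ ∈ Finset.univ.filter
          (fun σ : (Fin m × Bool) ≃ H => κ ∘ σ = c), ∏ i, w (c (i, false)) (c (i, true)) := by
    rw [← Finset.sum_fiberwise _ (fun σ : (Fin m × Bool) ≃ H => κ ∘ σ)]
    refine Finset.sum_congr rfl fun c _ => Finset.sum_congr rfl fun σ hσ => ?_
    rw [← (Finset.mem_filter.1 hσ).2]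
    rfl
  have h2 : ∑ c : Fin m × Bool → X, ∏ i, w (c (i, false)) (c (i, true))
      = (∑ x, ∑ y, w x y) ^ m := by
    have h3 : ∑ x, ∑ y, w x y = ∑ b : Bool → X, w (b false) (b true) := by
      rw [← Fintype.sum_prod_type']
      exact (Fintype.sum_equiv (Equiv.boolArrowEquivProd X) _ _ fun b => rfl).symm
    rw [h3, Fintype.sum_pow]
    refine Fintype.sum_equiv (Equiv.curry (Fin m) Bool X) _ _ fun c => ?_
    simp only [Equiv.curry_apply, Function.curry_apply]
  rw [h1, ← h2, Finset.mul_sum]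
  refine Finset.sum_le_sum fun c _ => ?_
  rw [Finset.sum_const, nsmul_eq_mul]
  refine mul_le_mul_of_nonneg_right ?_ (Finset.prod_nonneg fun i _ => hw _ _)
  exact_mod_cast card_equiv_comp_eq_le κ c

/-- The regular graphs. -/
def regGraphs (n k : ℕ) : Finset (Fin n → Fin n → Bool) :=
  Finset.univ.filter fun g => IsRegAdj n k g

lemma prod_edgesOf_of_mem_graphFiber {X : Type*} {n k m : ℕ} {g : Fin n → Fin n → Bool}
    (hg : IsRegAdj n k g) {σ : Config n k m} (hσ : σ ∈ graphFiber k m g) (ψ : Fin n → X)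
    (A B : ℝ) :
    ∏ e ∈ edgesOf g, (if ψ e.1 = ψ e.2 then A else B) =
      ∏ i, if ψ (σ (i, false)).1 = ψ (σ (i, true)).1 then A else B := by
  have h1 := sum_edgesOf_of_mem_graphFiber hg hσ (fun e => if ψ e.1 = ψ e.2 then 1 else 0)
    fun d => by simp [eq_comm]
  have h2 := sum_edgesOf_of_mem_graphFiber hg hσ (fun e => if ¬ ψ e.1 = ψ e.2 then 1 else 0)
    fun d => by simp [eq_comm]
  rw [← Finset.card_filter, ← Finset.card_filter] at h1 h2
  rw [Finset.prod_ite, Finset.prod_ite, Finset.prod_const, Finset.prod_const, Finset.prod_const,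
    Finset.prod_const, h1, h2]
  rfl

/-- The number of vertices of colour `x`. -/
def colorCount {X : Type*} {n : ℕ} (ψ : Fin n → X) (x : X) : ℕ :=
  (Finset.univ.filter fun u => ψ u = x).card

lemma sum_regGraphs_prod_le {X : Type*} [Fintype X] {n k m : ℕ} (hm : 3 ≤ m)
    (hnk : n * k = 2 * m) (hN : 3 * k + 2 * (k * k) + 4 * (k + k * k) < 2 * m)
    (ψ : Fin n → X) {A B : ℝ} (hA : 0 ≤ A) (hB : 0 ≤ B) :
    ∑ g ∈ regGraphs n k, ∏ e ∈ edgesOf g, (if ψ e.1 = ψ e.2 then A else B) ≤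
      (regGraphs n k).card * (2 * (1 + (2 * m : ℝ) ^ 2) ^ (2 * (k + k * k))) *
        ((∏ x, ((k * colorCount ψ x).factorial : ℝ)) / (2 * m).factorial) *
        (∑ x : X, ∑ y : X, if x = y then A else B) ^ m := by
  set W : Config n k m → ℝ := fun σ =>
    ∏ i, if ψ (σ (i, false)).1 = ψ (σ (i, true)).1 then A else B with hW
  have hW0 : ∀ σ, 0 ≤ W σ := fun σ => Finset.prod_nonneg fun i _ => by split_ifs <;> assumption
  have hsum : ∑ σ, W σ ≤ (∏ x, ((k * colorCount ψ x).factorial : ℝ)) *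
      (∑ x : X, ∑ y : X, if x = y then A else B) ^ m := by
    refine (sum_equiv_prod_le (fun h : Fin n × Fin k => ψ h.1)
      (fun x y => if x = y then A else B) (fun x y => by split_ifs <;> assumption)).trans
      (le_of_eq ?_)
    congr 1
    refine Finset.prod_congr rfl fun x _ => ?_
    have : (Finset.univ.filter fun h : Fin n × Fin k => ψ h.1 = x) =
        (Finset.univ.filter fun u => ψ u = x) ×ˢ Finset.univ := by
      ext h
      simp
    rw [this, Finset.card_product, Finset.card_univ, Fintype.card_fin, mul_comm]
    rfl
  have hpoly := card_config_le_poly_mul_simple (n := n) hm hN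
  have hcfg : Fintype.card (Config n k m) = (2 * m).factorial := by
    have e : (Fin m × Bool) ≃ (Fin n × Fin k) := Fintype.equivOfCardEq (by simp; omega)
    rw [Fintype.card_equiv e]
    simp [mul_comm]
  rw [hcfg] at hpoly
  set P := 2 * (1 + (2 * m) ^ 2) ^ (2 * (k + k * k)) with hP
  have hne : (fewBad n k m 0).Nonempty := by
    rw [← Finset.card_pos]
    rcases Nat.eq_zero_or_pos (fewBad n k m 0).card with h | h
    · rw [h, mul_zero] at hpoly
      exact absurd hpoly (not_le.2 (Nat.factorial_pos _))
    · exact h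
  obtain ⟨σ₀, hσ₀⟩ := hne
  obtain ⟨g₀, hg₀, hσg⟩ := exists_regular_of_mem_fewBad hσ₀
  set F := (graphFiber k m g₀).card with hF
  have hFpos : 0 < F := Finset.card_pos.2 ⟨σ₀, hσg⟩
  have hreg : ∀ g ∈ regGraphs n k, IsRegAdj n k g := fun g hg => (Finset.mem_filter.1 hg).2
  have hfew : (fewBad n k m 0).card ≤ (regGraphs n k).card * F := by
    have hsub : fewBad n k m 0 ⊆ (regGraphs n k).biUnion (graphFiber k m) := by
      intro σ hσ
      obtain ⟨g, hg, h⟩ := exists_regular_of_mem_fewBad hσ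
      exact Finset.mem_biUnion.2 ⟨g, Finset.mem_filter.2 ⟨Finset.mem_univ _, hg⟩, h⟩
    exact (Finset.card_le_card hsub).trans (Finset.card_biUnion_le_card_mul _ _ _
      fun g hg => (card_graphFiber_eq (hreg g hg) hg₀).le)
  have hFsum : F * ∑ g ∈ regGraphs n k, ∏ e ∈ edgesOf g, (if ψ e.1 = ψ e.2 then A else B)
      ≤ ∑ σ, W σ := by
    have h1 : F * ∑ g ∈ regGraphs n k, ∏ e ∈ edgesOf g, (if ψ e.1 = ψ e.2 then A else B)
        = ∑ g ∈ regGraphs n k, ∑ σ ∈ graphFiber k m g, W σ := by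
      rw [Finset.mul_sum]
      refine Finset.sum_congr rfl fun g hg => ?_
      rw [hF, card_graphFiber_eq hg₀ (hreg g hg), ← nsmul_eq_mul, ← Finset.sum_const]
      exact Finset.sum_congr rfl fun σ hσ =>
        prod_edgesOf_of_mem_graphFiber (hreg g hg) hσ ψ A B
    rw [h1, ← Finset.sum_biUnion]
    · exact Finset.sum_le_sum_of_subset_of_nonneg (Finset.subset_univ _) fun σ _ _ => hW0 σ
    · intro g _ g' _ hgg'
      refine Finset.disjoint_left.2 fun σ h h' => hgg' (graphFiber_disjoint h h')
  have hfact : ((2 * m).factorial : ℝ) ≤ (P : ℝ) * ((regGraphs n k).card * F) := by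
    exact_mod_cast hpoly.trans (Nat.mul_le_mul_left _ hfew)
  have hfpos : (0 : ℝ) < (2 * m).factorial := by exact_mod_cast Nat.factorial_pos _
  have hFpos' : (0 : ℝ) < F := by exact_mod_cast hFpos
  have hPc : (2 * (1 + (2 * m : ℝ) ^ 2) ^ (2 * (k + k * k))) = (P : ℝ) := by
    rw [hP]; push_cast; rfl
  rw [hPc]
  have hS := hFsum.trans hsum
  set Z := ∑ g ∈ regGraphs n k, ∏ e ∈ edgesOf g, (if ψ e.1 = ψ e.2 then A else B)
  set D := ∏ x, ((k * colorCount ψ x).factorial : ℝ)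
  set T := (∑ x : X, ∑ y : X, if x = y then A else B) ^ m
  have hDT : 0 ≤ D * T := (Finset.sum_nonneg fun σ _ => hW0 σ).trans hsum
  have h2 : Z ≤ D * T / F := by
    rw [le_div_iff₀ hFpos', mul_comm]
    exact hS
  refine h2.trans ?_
  rw [div_le_iff₀ hFpos']
  have h3 : (regGraphs n k).card * (P : ℝ) * (D / (2 * m).factorial) * T * F =
      (D * T) * ((P : ℝ) * ((regGraphs n k).card * F) / (2 * m).factorial) := by ring
  rw [h3]
  exact le_mul_of_one_le_right hDT ((one_le_div hfpos).2 hfact)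

/-! ### Factorial estimates -/

lemma factorial_le_mul_pow {N : ℕ} (hN : 1 ≤ N) :
    (N.factorial : ℝ) ≤ Real.exp 1 * N * (N / Real.exp 1) ^ N := by
  induction N, hN using Nat.le_induction with
  | base => simp [Real.exp_ne_zero]
  | succ N hN ih =>
    have hNpos : (0 : ℝ) < N := by exact_mod_cast hN
    have h1 : Real.exp 1 ≤ ((N + 1) / N : ℝ) ^ (N + 1) := by
      rw [← Real.exp_log (show (0 : ℝ) < ((N + 1) / N : ℝ) by positivity), ← Real.exp_nat_mul]
      apply Real.exp_le_exp.2
      have := Real.one_sub_inv_le_log_of_pos (show (0 : ℝ) < ((N + 1) / N : ℝ) by positivity)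
      have h2 : 1 - ((N + 1) / N : ℝ)⁻¹ = 1 / (N + 1) := by field_simp; ring
      rw [h2, div_le_iff₀ (by positivity)] at this
      push_cast
      linarith
    rw [div_pow, le_div_iff₀ (by positivity)] at h1
    rw [Nat.factorial_succ]
    push_cast
    calc ((N : ℝ) + 1) * N.factorial
        ≤ (N + 1) * (Real.exp 1 * N * (N / Real.exp 1) ^ N) := by gcongr
      _ = (N + 1) / Real.exp 1 ^ N * (Real.exp 1 * N ^ (N + 1)) := by
          rw [div_pow]; ring
      _ ≤ (N + 1) / Real.exp 1 ^ N * (N + 1) ^ (N + 1) := by gcongr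
      _ = Real.exp 1 * (N + 1) * ((N + 1) / Real.exp 1) ^ (N + 1) := by
          rw [div_pow, pow_succ (Real.exp 1)]
          field_simp

lemma prod_factorial_div_le {X : Type*} [Fintype X] (a : X → ℕ) {N : ℕ} (hN : ∑ x, a x = N)
    {ρ : ℝ} (hρ : 0 ≤ ρ) (ha : ∀ x, (a x : ℝ) ≤ ρ * N) :
    (∏ x, ((a x).factorial : ℝ)) / N.factorial
      ≤ (Real.exp 1 * (N + 1)) ^ Fintype.card X * ρ ^ N := by
  have h1 : ∀ x, ((a x).factorial : ℝ) ≤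
      (Real.exp 1 * (N + 1)) * (ρ * N / Real.exp 1) ^ a x := by
    intro x
    have haN : (a x : ℝ) ≤ N := by
      rw [← hN]
      exact_mod_cast Finset.single_le_sum (fun i _ => Nat.zero_le (a i)) (Finset.mem_univ x)
    rcases Nat.eq_zero_or_pos (a x) with h | h
    · rw [h]
      have : 1 ≤ Real.exp 1 := Real.one_le_exp zero_le_one
      have h0 : (0 : ℝ) ≤ N := Nat.cast_nonneg N
      simp only [Nat.factorial_zero, Nat.cast_one, pow_zero, mul_one]
      nlinarith
    · refine (factorial_le_mul_pow h).trans ?_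
      have := ha x
      gcongr
      linarith
  have h2 : (∏ x, ((a x).factorial : ℝ)) ≤
      (Real.exp 1 * (N + 1)) ^ Fintype.card X * (ρ * N / Real.exp 1) ^ N := by
    refine (Finset.prod_le_prod (fun x _ => Nat.cast_nonneg _) fun x _ => h1 x).trans
      (le_of_eq ?_)
    rw [Finset.prod_mul_distrib, Finset.prod_const, Finset.prod_pow_eq_pow_sum, hN,
      Finset.card_univ]
  have hfpos : (0 : ℝ) < N.factorial := by exact_mod_cast Nat.factorial_pos _
  rw [div_le_iff₀ hfpos]
  refine h2.trans ?_
  rw [mul_assoc]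
  gcongr
  have h3 := Real.pow_div_factorial_le_exp (N : ℝ) (Nat.cast_nonneg N) N
  rw [div_le_iff₀ hfpos] at h3
  rw [mul_div_assoc, mul_pow, div_pow, ← Real.exp_nat_mul, mul_one]
  gcongr
  rw [div_le_iff₀ (Real.exp_pos _)]
  linarith

lemma sum_colorCount {X : Type*} [Fintype X] {n : ℕ} (ψ : Fin n → X) :
    ∑ x, colorCount ψ x = n := by
  have := Finset.card_eq_sum_card_fiberwise (f := ψ) (s := Finset.univ) (t := Finset.univ)
    (fun _ _ => Finset.mem_coe.2 (Finset.mem_univ _))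
  simpa [colorCount] using this.symm

/-- The polynomial loss in the comparison with independent half-edge colours. -/
def polyLoss (k q m : ℕ) : ℝ :=
  2 * (1 + (2 * m : ℝ) ^ 2) ^ (2 * (k + k * k)) * (Real.exp 1 * (2 * m + 1)) ^ q

lemma sum_regGraphs_prod_le_of_balanced {X : Type*} [Fintype X] {n k m : ℕ} (hm : 3 ≤ m)
    (hnk : n * k = 2 * m) (hN : 3 * k + 2 * (k * k) + 4 * (k + k * k) < 2 * m)
    (ψ : Fin n → X) {ρ : ℝ} (hρ : 0 ≤ ρ) (hψ : ∀ x, (colorCount ψ x : ℝ) ≤ ρ * n)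
    {A B : ℝ} (hA : 0 ≤ A) (hB : 0 ≤ B) :
    ∑ g ∈ regGraphs n k, ∏ e ∈ edgesOf g, (if ψ e.1 = ψ e.2 then A else B) ≤
      (regGraphs n k).card * polyLoss k (Fintype.card X) m *
        (ρ ^ 2 * (Fintype.card X * (A + (Fintype.card X - 1) * B))) ^ m := by
  refine (sum_regGraphs_prod_le hm hnk hN ψ hA hB).trans ?_
  have h1 := prod_factorial_div_le (fun x => k * colorCount ψ x) (N := 2 * m)
    (by rw [← Finset.mul_sum, sum_colorCount, mul_comm, hnk]) hρ (fun x => by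
      have h2 : ((2 * m : ℕ) : ℝ) = n * k := by rw [← hnk]; push_cast; rfl
      rw [h2]
      push_cast
      nlinarith [hψ x, (Nat.cast_nonneg k : (0 : ℝ) ≤ k)])
  have h3 : (∑ x : X, ∑ y : X, if x = y then A else B) =
      Fintype.card X * (A + (Fintype.card X - 1) * B) := by
    have : ∀ x y : X, (if x = y then A else B) = (if x = y then A - B else 0) + B := by
      intro x y
      split_ifs <;> ring
    simp only [this, Finset.sum_add_distrib, Finset.sum_ite_eq, Finset.mem_univ, if_true,
      Finset.sum_const, Finset.card_univ, nsmul_eq_mul]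
    ring
  have h4 : 0 ≤ (Fintype.card X * (A + (Fintype.card X - 1) * B) : ℝ) := by
    rw [← h3]
    exact Finset.sum_nonneg fun x _ => Finset.sum_nonneg fun y _ => by split_ifs <;> assumption
  rw [h3, polyLoss, mul_pow (ρ ^ 2), ← pow_mul ρ]
  push_cast at h1
  calc _ ≤ ((regGraphs n k).card : ℝ) * (2 * (1 + (2 * m : ℝ) ^ 2) ^ (2 * (k + k * k))) *
        ((Real.exp 1 * (2 * m + 1)) ^ Fintype.card X * ρ ^ (2 * m)) *
        (Fintype.card X * (A + (Fintype.card X - 1) * B)) ^ m := by gcongr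
    _ = _ := by ring

/-! ### The union bound for the observation model -/

lemma sum_piFinset_prod {ι β : Type*} [Fintype ι] [DecidableEq ι] [Fintype β] (E : Finset ι)
    (b₀ : β) (h : ι → β → ℝ) :
    ∑ y ∈ Fintype.piFinset (fun e => if e ∈ E then (Finset.univ : Finset β) else {b₀}),
      ∏ e ∈ E, h e (y e) = ∏ e ∈ E, ∑ b, h e b := by
  have h1 := Finset.prod_univ_sum (fun e => if e ∈ E then (Finset.univ : Finset β) else {b₀})
    (fun e b => if e ∈ E then h e b else 1)
  have h2 : ∀ F : ι → ℝ, ∏ e, (if e ∈ E then F e else 1) = ∏ e ∈ E, F e := fun F => by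
    rw [Fintype.prod_ite_mem]
  simp only [h2] at h1
  rw [← h1, ← h2]
  refine Finset.prod_congr rfl fun e _ => ?_
  split_ifs <;> simp

/-- First-moment bound: an event dominated by a sum of functions which factorise over the edges
has probability at most the sum of their averages. -/
lemma RegSpace.IsRegModel.measureReal_le {X Y' J : Type*} [Fintype X] [Fintype Y'] [Nonempty Y']
    [Fintype J] {Q : X → X → Y' → ℝ} (hQ : ∀ a b y, 0 ≤ Q a b y) {n k : ℕ}
    {M : RegSpace X Y' n} (hM : M.IsRegModel Q k)
    (R : (Fin n → Fin n → Bool) → (Fin n → X) → (Fin n × Fin n → Y') → Prop)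
    (c : J → (Fin n → Fin n → Bool) → (Fin n → X) → ℝ) (hc : ∀ j g θ, 0 ≤ c j g θ)
    (φ : J → (Fin n → X) → Fin n × Fin n → Y' → ℝ)
    (hφ : ∀ j θ e b, 0 ≤ φ j θ e b)
    (hR : ∀ g θ y, IsRegAdj n k g → R g θ y →
      1 ≤ ∑ j, c j g θ * ∏ e ∈ edgesOf g, φ j θ e (y e)) :
    M.P.real {ω | R (M.G ω) (M.θ0 ω) (fun e => M.Yobs e ω)} ≤
      ((regGraphs n k).card : ℝ)⁻¹ * ((Fintype.card X : ℝ)⁻¹) ^ n *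
        ∑ g ∈ regGraphs n k, ∑ θ : Fin n → X, ∑ j, c j g θ *
          ∏ e ∈ edgesOf g, ∑ b, Q (θ e.1) (θ e.2) b * φ j θ e b := by
  obtain ⟨hprob, -, hG, -, -, hreg, hlaw⟩ := hM
  obtain ⟨b₀⟩ := ‹Nonempty Y'›
  have hcardReg : (Nat.card {g' : Fin n → Fin n → Bool // IsRegAdj n k g'} : ℝ) =
      (regGraphs n k).card := by
    rw [Nat.card_eq_fintype_card, Fintype.card_subtype, regGraphs]
  set w : ℝ := ((regGraphs n k).card : ℝ)⁻¹ * ((Fintype.card X : ℝ)⁻¹) ^ n with hw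
  have hw0 : 0 ≤ w := by positivity
  set t : (Fin n → Fin n → Bool) → Finset (Fin n × Fin n → Y') := fun g =>
    Fintype.piFinset fun e => if e ∈ edgesOf g then Finset.univ else {b₀} with ht
  set cyl : (Fin n → Fin n → Bool) → (Fin n → X) → (Fin n × Fin n → Y') → Set M.Ω :=
    fun g θ y => {ω | M.G ω = g ∧ M.θ0 ω = θ ∧ ∀ e ∈ edgesOf g, M.Yobs e ω = y e} with hcyl
  have hcylP : ∀ g ∈ regGraphs n k, ∀ θ y, M.P.real (cyl g θ y) =
      w * ∏ e ∈ edgesOf g, Q (θ e.1) (θ e.2) (y e) := by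
    intro g hg θ y
    have := hlaw g (Finset.mem_filter.1 hg).2 θ (edgesOf g) (fun _ h => h) y
    rw [hcardReg] at this
    exact this
  set good : (Fin n → Fin n → Bool) → (Fin n → X) → Finset (Fin n × Fin n → Y') := fun g θ =>
    (t g).filter fun y => 1 ≤ ∑ j, c j g θ * ∏ e ∈ edgesOf g, φ j θ e (y e) with hgood
  have hsub : {ω | R (M.G ω) (M.θ0 ω) (fun e => M.Yobs e ω)} ⊆
      {ω | IsRegAdj n k (M.G ω)}ᶜ ∪ ⋃ g ∈ regGraphs n k, ⋃ θ ∈ (Finset.univ : Finset (Fin n → X)),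
        ⋃ y ∈ good g θ, cyl g θ y := by
    intro ω hω
    by_cases hr : IsRegAdj n k (M.G ω)
    · right
      simp only [Set.mem_iUnion]
      refine ⟨M.G ω, Finset.mem_filter.2 ⟨Finset.mem_univ _, hr⟩, M.θ0 ω, Finset.mem_univ _,
        fun e => if e ∈ edgesOf (M.G ω) then M.Yobs e ω else b₀, ?_, rfl, rfl, fun e he => ?_⟩
      · refine Finset.mem_filter.2 ⟨?_, ?_⟩
        · rw [ht, Fintype.mem_piFinset]
          intro e
          split_ifs <;> simp
        · refine (hR _ _ _ hr hω).trans (le_of_eq ?_)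
          refine Finset.sum_congr rfl fun j _ => ?_
          congr 1
          refine Finset.prod_congr rfl fun e he => ?_
          simp only [if_pos he]
      · simp only [if_pos he]
    · exact Or.inl hr
  have hmeas : MeasurableSet {ω | IsRegAdj n k (M.G ω)} :=
    hG (t := {g | IsRegAdj n k g}) MeasurableSpace.measurableSet_top
  have hnull : M.P.real {ω | IsRegAdj n k (M.G ω)}ᶜ = 0 := by
    rw [measureReal_def, (prob_compl_eq_zero_iff hmeas).2 hreg]
    rfl
  calc M.P.real {ω | R (M.G ω) (M.θ0 ω) (fun e => M.Yobs e ω)}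
      ≤ M.P.real {ω | IsRegAdj n k (M.G ω)}ᶜ + M.P.real (⋃ g ∈ regGraphs n k,
          ⋃ θ ∈ (Finset.univ : Finset (Fin n → X)), ⋃ y ∈ good g θ, cyl g θ y) :=
        (measureReal_mono hsub).trans (measureReal_union_le _ _)
    _ ≤ ∑ g ∈ regGraphs n k, ∑ θ : Fin n → X, ∑ y ∈ good g θ, M.P.real (cyl g θ y) := by
        rw [hnull, zero_add]
        refine (measureReal_biUnion_finset_le _ _).trans (Finset.sum_le_sum fun g _ => ?_)
        refine (measureReal_biUnion_finset_le _ _).trans (Finset.sum_le_sum fun θ _ => ?_)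
        exact measureReal_biUnion_finset_le _ _
    _ ≤ ∑ g ∈ regGraphs n k, ∑ θ : Fin n → X, w * ∑ j, c j g θ *
          ∏ e ∈ edgesOf g, ∑ b, Q (θ e.1) (θ e.2) b * φ j θ e b := by
        refine Finset.sum_le_sum fun g hg => Finset.sum_le_sum fun θ _ => ?_
        have hnn : ∀ y : Fin n × Fin n → Y', 0 ≤ w * ∏ e ∈ edgesOf g, Q (θ e.1) (θ e.2) (y e) :=
          fun y => mul_nonneg hw0 (Finset.prod_nonneg fun e _ => hQ _ _ _)
        have hnn' : ∀ y : Fin n × Fin n → Y',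
            0 ≤ ∑ j, c j g θ * ∏ e ∈ edgesOf g, φ j θ e (y e) := fun y =>
          Finset.sum_nonneg fun j _ => mul_nonneg (hc _ _ _)
            (Finset.prod_nonneg fun e _ => hφ _ _ _ _)
        calc ∑ y ∈ good g θ, M.P.real (cyl g θ y)
            ≤ ∑ y ∈ good g θ, (w * ∏ e ∈ edgesOf g, Q (θ e.1) (θ e.2) (y e)) *
                ∑ j, c j g θ * ∏ e ∈ edgesOf g, φ j θ e (y e) := by
              refine Finset.sum_le_sum fun y hy => ?_
              rw [hcylP g hg]
              exact le_mul_of_one_le_right (hnn y) (Finset.mem_filter.1 hy).2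
          _ ≤ ∑ y ∈ t g, (w * ∏ e ∈ edgesOf g, Q (θ e.1) (θ e.2) (y e)) *
                ∑ j, c j g θ * ∏ e ∈ edgesOf g, φ j θ e (y e) :=
              Finset.sum_le_sum_of_subset_of_nonneg (Finset.filter_subset _ _)
                fun y _ _ => mul_nonneg (hnn y) (hnn' y)
          _ = w * ∑ j, c j g θ *
                ∏ e ∈ edgesOf g, ∑ b, Q (θ e.1) (θ e.2) b * φ j θ e b := by
              simp only [← sum_piFinset_prod (edgesOf g) b₀, Finset.mul_sum]
              rw [Finset.sum_comm]
              refine Finset.sum_congr rfl fun j _ => Finset.sum_congr rfl fun y _ => ?_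
              rw [Finset.prod_mul_distrib]
              ring
    _ = _ := by simp only [Finset.mul_sum]

/-! ### Exponential moments under bounded differences -/

lemma exp_le_one_add_add_sq {t : ℝ} (ht : |t| ≤ 1) : Real.exp t ≤ 1 + t + t ^ 2 := by
  have := (abs_le.1 (Real.abs_exp_sub_one_sub_id_le ht)).2
  linarith

lemma sum_exp_le_of_bounded_diff {X : Type*} [Fintype X] [Nonempty X] {c : ℝ} (hc1 : c ≤ 1)
    {n : ℕ} (f : (Fin n → X) → ℝ)
    (hf : ∀ θ θ' v, (∀ w, w ≠ v → θ w = θ' w) → |f θ - f θ'| ≤ c) :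
    ((Fintype.card X : ℝ)⁻¹) ^ n * ∑ θ, Real.exp (f θ) ≤
      Real.exp (((Fintype.card X : ℝ)⁻¹) ^ n * ∑ θ, f θ + n * c ^ 2) := by
  have hq : (0 : ℝ) < Fintype.card X := by exact_mod_cast Fintype.card_pos
  induction n with
  | zero => simp
  | succ n ih =>
    set q : ℝ := (Fintype.card X : ℝ) with hqdef
    set h : (Fin n → X) → ℝ := fun θ => q⁻¹ * ∑ x, f (Fin.cons x θ) with hh
    have hsum : ∀ F : (Fin (n + 1) → X) → ℝ, ∑ θ, F θ = ∑ θ : Fin n → X, ∑ x, F (Fin.cons x θ) := by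
      intro F
      rw [← Fintype.sum_prod_type_right' (f := fun x θ => F (Fin.cons x θ))]
      exact (Fintype.sum_equiv (Fin.consEquiv fun _ => X) _ _ fun _ => rfl).symm
    have hconst : ∀ a : ℝ, q⁻¹ * ∑ _x : X, a = a := fun a => by
      rw [Finset.sum_const, Finset.card_univ, nsmul_eq_mul, ← hqdef]
      field_simp
    have havg : ∀ (F : X → ℝ) (a : ℝ), (∀ x, |F x - a| ≤ c) → |q⁻¹ * ∑ x, F x - a| ≤ c := by
      intro F a hF
      rw [← hconst a, ← mul_sub, ← Finset.sum_sub_distrib, abs_mul, abs_of_pos (inv_pos.2 hq)]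
      calc _ ≤ q⁻¹ * ∑ _x : X, c := by
            gcongr
            exact (Finset.abs_sum_le_sum_abs _ _).trans (Finset.sum_le_sum fun x _ => hF x)
        _ = c := hconst c
    have hdiff : ∀ θ θ' v, (∀ w, w ≠ v → θ w = θ' w) → |h θ - h θ'| ≤ c := by
      intro θ θ' v hv
      rw [hh]
      simp only
      rw [← mul_sub, ← Finset.sum_sub_distrib, ← sub_zero (q⁻¹ * _)]
      refine havg _ 0 fun x => ?_
      rw [sub_zero]
      refine hf _ _ v.succ fun w hw => ?_
      rcases Fin.eq_zero_or_eq_succ w with rfl | ⟨w, rfl⟩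
      · rfl
      · exact hv w fun h => hw (by rw [h])
    have hstep : ∀ θ, q⁻¹ * ∑ x, Real.exp (f (Fin.cons x θ)) ≤
        Real.exp (h θ) * Real.exp (c ^ 2) := by
      intro θ
      have hdev : ∀ x, |f (Fin.cons x θ) - h θ| ≤ c := by
        intro x
        rw [abs_sub_comm]
        refine havg _ _ fun x' => hf _ _ 0 fun w hw => ?_
        rcases Fin.eq_zero_or_eq_succ w with rfl | ⟨w, rfl⟩
        · exact absurd rfl hw
        · rfl
      have h1 : ∀ x, Real.exp (f (Fin.cons x θ)) ≤
          Real.exp (h θ) * (1 + c ^ 2) + Real.exp (h θ) * (f (Fin.cons x θ) - h θ) := by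
        intro x
        have h2 := exp_le_one_add_add_sq ((hdev x).trans hc1)
        have h3 : (f (Fin.cons x θ) - h θ) ^ 2 ≤ c ^ 2 := sq_le_sq' (abs_le.1 (hdev x)).1
          (abs_le.1 (hdev x)).2
        calc Real.exp (f (Fin.cons x θ))
            = Real.exp (h θ) * Real.exp (f (Fin.cons x θ) - h θ) := by
              rw [← Real.exp_add]; congr 1; ring
          _ ≤ Real.exp (h θ) * (1 + (f (Fin.cons x θ) - h θ) + c ^ 2) := by
              gcongr; linarith
          _ = _ := by ring
      calc _ ≤ q⁻¹ * ∑ x, (Real.exp (h θ) * (1 + c ^ 2) +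
            Real.exp (h θ) * (f (Fin.cons x θ) - h θ)) := by
            gcongr with x; exact h1 x
        _ = Real.exp (h θ) * (1 + c ^ 2) := by
            rw [Finset.sum_add_distrib, mul_add, hconst, ← Finset.mul_sum,
              Finset.sum_sub_distrib]
            have : q⁻¹ * (Real.exp (h θ) * (∑ x, f (Fin.cons x θ) - ∑ _x : X, h θ)) =
                Real.exp (h θ) * (h θ - q⁻¹ * ∑ _x : X, h θ) := by
              rw [hh]; ring
            rw [this, hconst]
            ring
        _ ≤ _ := by
            gcongr
            linarith [Real.add_one_le_exp (c ^ 2)]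
    have hmean : (q⁻¹) ^ (n + 1) * ∑ θ, f θ = (q⁻¹) ^ n * ∑ θ, h θ := by
      rw [hsum, hh, ← Finset.mul_sum, pow_succ, mul_assoc]
    rw [hmean, hsum, pow_succ, mul_assoc, Finset.mul_sum]
    calc _ ≤ (q⁻¹) ^ n * ∑ θ, Real.exp (h θ) * Real.exp (c ^ 2) := by
          exact mul_le_mul_of_nonneg_left (Finset.sum_le_sum fun θ _ => hstep θ) (by positivity)
      _ = ((q⁻¹) ^ n * ∑ θ, Real.exp (h θ)) * Real.exp (c ^ 2) := by
          rw [← Finset.sum_mul, mul_assoc]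
      _ ≤ Real.exp ((q⁻¹) ^ n * ∑ θ, h θ + n * c ^ 2) * Real.exp (c ^ 2) := by
          gcongr; exact ih h hdiff
      _ = _ := by
          rw [← Real.exp_add]; congr 1; push_cast; ring

/-! ### Typicality of the true labels -/

lemma card_incident_le {n k : ℕ} {g : Fin n → Fin n → Bool} (hg : IsRegAdj n k g) (v : Fin n) :
    ((edgesOf g).filter fun e => e.1 = v ∨ e.2 = v).card ≤ k := by
  rw [← hg.2.2 v]
  refine Finset.card_le_card_of_injOn (fun e => if e.1 = v then e.2 else e.1) ?_ ?_
  · rintro ⟨a, b⟩ he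
    simp only [edgesOf, Finset.coe_filter, Finset.mem_filter, Finset.mem_univ, true_and,
      Set.mem_ofPred_eq] at he ⊢
    rcases he with ⟨⟨hlt, h⟩, rfl | rfl⟩
    · rwa [if_pos rfl]
    · split_ifs with h'
      · exact absurd h' (hlt.ne)
      · rwa [hg.1]
  · rintro ⟨a, b⟩ he ⟨a', b'⟩ he' h
    simp only [edgesOf, Finset.coe_filter, Finset.mem_filter, Finset.mem_univ, true_and,
      Set.mem_ofPred_eq] at he he' h
    grind

lemma card_filter_two_values {X : Type*} [Fintype X] {n : ℕ} {u v : Fin n} (huv : u ≠ v)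
    (x₁ x₂ : X) :
    Fintype.card X ^ 2 *
      (Finset.univ.filter fun θ : Fin n → X => θ u = x₁ ∧ θ v = x₂).card
      = Fintype.card X ^ n := by
  have h1 : (Finset.univ.filter fun θ : Fin n → X => θ u = x₁ ∧ θ v = x₂) =
      Fintype.piFinset fun w => if w = u then {x₁} else if w = v then {x₂} else Finset.univ := by
    ext θ
    simp only [Finset.mem_filter, Finset.mem_univ, true_and, Fintype.mem_piFinset]
    constructor
    · rintro ⟨h, h'⟩ w
      split_ifs with hu hv
      · rw [hu, h]; simp
      · rw [hv, h']; simp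
      · simp
    · intro h
      have hu := h u
      have hv := h v
      rw [if_pos rfl] at hu
      rw [if_neg huv.symm, if_pos rfl] at hv
      exact ⟨Finset.mem_singleton.1 hu, Finset.mem_singleton.1 hv⟩
  have h2 : v ∈ Finset.univ.erase u := Finset.mem_erase.2 ⟨huv.symm, Finset.mem_univ _⟩
  rw [h1, Fintype.card_piFinset, ← Finset.mul_prod_erase _ _ (Finset.mem_univ u),
    ← Finset.mul_prod_erase _ _ h2, if_pos rfl, if_neg huv.symm, if_pos rfl,
    Finset.prod_congr rfl (g := fun _ => Fintype.card X), Finset.prod_const,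
    Finset.card_erase_of_mem h2, Finset.card_erase_of_mem (Finset.mem_univ _), Finset.card_univ,
    Fintype.card_fin]
  · have : 2 ≤ n := by
      have := u.2; have := v.2
      have : (u : ℕ) ≠ v := fun h => huv (Fin.ext h)
      omega
    rw [Finset.card_singleton, Finset.card_singleton, one_mul, one_mul, ← pow_add]
    congr 1
    omega
  · intro w hw
    rw [if_neg (Finset.mem_erase.1 (Finset.mem_erase.1 hw).2).1, if_neg (Finset.mem_erase.1 hw).1]
    rfl

lemma sum_card_pair_eq {X : Type*} [Fintype X] [Nonempty X] {n : ℕ} (g : Fin n → Fin n → Bool)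
    (x₁ x₂ : X) :
    ((Fintype.card X : ℝ)⁻¹) ^ n * ∑ θ : Fin n → X, ∑ e ∈ edgesOf g,
        (if θ e.1 = x₁ ∧ θ e.2 = x₂ then (1 : ℝ) else 0) =
      (edgesOf g).card * ((Fintype.card X : ℝ)⁻¹) ^ 2 := by
  have hq : (0 : ℝ) < Fintype.card X := by exact_mod_cast Fintype.card_pos
  rw [Finset.sum_comm, Finset.mul_sum, Finset.sum_congr rfl
    (g := fun _ => ((Fintype.card X : ℝ)⁻¹) ^ 2), Finset.sum_const, nsmul_eq_mul]
  intro e he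
  have hne : e.1 ≠ e.2 := (Finset.mem_filter.1 he).2.1.ne
  rw [← Finset.sum_filter, Finset.sum_const, nsmul_eq_mul, mul_one]
  have := card_filter_two_values hne x₁ x₂
  have h2 : (Fintype.card X : ℝ) ^ 2 *
      (Finset.univ.filter fun θ : Fin n → X => θ e.1 = x₁ ∧ θ e.2 = x₂).card
      = (Fintype.card X : ℝ) ^ n := by exact_mod_cast this
  rw [inv_pow, inv_pow, ← h2]
  have h3 : ((Finset.univ.filter fun θ : Fin n → X => θ e.1 = x₁ ∧ θ e.2 = x₂).card : ℝ) ≠ 0 := by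
    intro h
    rw [h, mul_zero] at h2
    exact (pow_pos hq n).ne h2
  field_simp

lemma abs_sum_pair_sub_le {X : Type*} {n k : ℕ} {g : Fin n → Fin n → Bool}
    (hg : IsRegAdj n k g) (x₁ x₂ : X) {θ θ' : Fin n → X} {v : Fin n}
    (h : ∀ w, w ≠ v → θ w = θ' w) :
    |∑ e ∈ edgesOf g, (if θ e.1 = x₁ ∧ θ e.2 = x₂ then (1 : ℝ) else 0) -
      ∑ e ∈ edgesOf g, (if θ' e.1 = x₁ ∧ θ' e.2 = x₂ then (1 : ℝ) else 0)| ≤ k := by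
  rw [← Finset.sum_sub_distrib]
  calc _ ≤ ∑ e ∈ edgesOf g, (if e.1 = v ∨ e.2 = v then (1 : ℝ) else 0) := by
        refine (Finset.abs_sum_le_sum_abs _ _).trans (Finset.sum_le_sum fun e _ => ?_)
        by_cases hv : e.1 = v ∨ e.2 = v
        · rw [if_pos hv]
          split_ifs <;> norm_num
        · rw [if_neg hv]
          push Not at hv
          rw [h _ hv.1, h _ hv.2, sub_self, abs_zero]
    _ ≤ k := by
        rw [← Finset.sum_filter, Finset.sum_const, nsmul_eq_mul, mul_one]
        exact_mod_cast card_incident_le hg v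

lemma sum_kernel_mul_exp_le {Y' : Type*} [Fintype Y'] {P : Y' → ℝ} (hP : ∀ b, 0 ≤ P b)
    (hP1 : ∑ b, P b = 1) {t : ℝ} (ht : |t| ≤ 1) (s : Prop) [Decidable s] (b₀ : Y') :
    ∑ b, P b * Real.exp (t * if s ∧ b = b₀ then 1 else 0) ≤
      Real.exp (t * P b₀ * (if s then 1 else 0) + t ^ 2) := by
  have h1 : ∀ b, Real.exp (t * if s ∧ b = b₀ then 1 else 0) ≤
      (1 + t ^ 2) + t * (if s then 1 else 0) * (if b = b₀ then 1 else 0) := by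
    intro b
    by_cases hs : s <;> by_cases hb : b = b₀ <;> simp [hs, hb]
    · linarith [exp_le_one_add_add_sq ht]
    all_goals positivity
  calc _ ≤ ∑ b, P b * ((1 + t ^ 2) + t * (if s then 1 else 0) * (if b = b₀ then 1 else 0)) :=
        Finset.sum_le_sum fun b _ => mul_le_mul_of_nonneg_left (h1 b) (hP b)
    _ = (1 + t ^ 2) + t * P b₀ * (if s then 1 else 0) := by
        have h2 : (1 + t ^ 2) + t * P b₀ * (if s then 1 else 0) = (1 + t ^ 2) * ∑ b, P b +
            t * (if s then 1 else 0) * ∑ b, if b = b₀ then P b else 0 := by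
          rw [hP1, Finset.sum_ite_eq', if_pos (Finset.mem_univ _)]
          ring
        rw [h2, Finset.mul_sum, Finset.mul_sum, ← Finset.sum_add_distrib]
        refine Finset.sum_congr rfl fun b _ => ?_
        by_cases hb : b = b₀
        · rw [if_pos hb, if_pos hb]; ring
        · rw [if_neg hb, if_neg hb]; ring
    _ ≤ _ := by
        have := Real.add_one_le_exp (t * P b₀ * (if s then 1 else 0) + t ^ 2)
        linarith

lemma exists_cell_of_lt_dTVedge {X Y' : Type*} [Fintype X] [Fintype Y'] [Nonempty X]
    [Nonempty Y'] {n : ℕ} {Q : X → X → Y' → ℝ} {g : Fin n → Fin n → Bool} {θ : Fin n → X}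
    {y : Fin n × Fin n → Y'} {η : ℝ} (h : η < dTVedge Q g θ y) :
    ∃ x₁ x₂ b, 2 / (Fintype.card X ^ 2 * Fintype.card Y') * η <
      |empEdge g θ y x₁ x₂ b - nuBarE Q x₁ x₂ b| := by
  by_contra! hcon
  have hX : (0 : ℝ) < Fintype.card X := by exact_mod_cast Fintype.card_pos
  have hY : (0 : ℝ) < Fintype.card Y' := by exact_mod_cast Fintype.card_pos
  refine h.not_ge ?_
  rw [dTVedge]
  calc _ ≤ (2 : ℝ)⁻¹ * ∑ _x₁ : X, ∑ _x₂ : X, ∑ _b : Y',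
        2 / (Fintype.card X ^ 2 * Fintype.card Y') * η := by
        gcongr with x₁ _ x₂ _ b _
        exact hcon x₁ x₂ b
    _ = η := by
        simp only [Finset.sum_const, Finset.card_univ, nsmul_eq_mul]
        field_simp

lemma RegSpace.IsRegModel.measureReal_lt_dTVedge_le {X Y' : Type*} [Fintype X] [Fintype Y']
    [Nonempty X] [Nonempty Y'] {Q : X → X → Y' → ℝ} (hQ : ∀ a b y, 0 ≤ Q a b y)
    (hQ1 : ∀ a b, ∑ y, Q a b y = 1) {n k m : ℕ} (hm : 0 < m) (hnk : n * k = 2 * m)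
    {M : RegSpace X Y' n} (hM : M.IsRegModel Q k) {η : ℝ} (hη : 0 ≤ η) {κ : ℝ}
    (hκ : κ = 2 / (Fintype.card X ^ 2 * Fintype.card Y')) (hηκ : κ * η ≤ 8) :
    M.P.real {ω | η < dTVedge Q (M.G ω) (M.θ0 ω) (fun e => M.Yobs e ω)} ≤
      Fintype.card (X × X × Y' × Bool) * Real.exp (-(κ ^ 2 / 32) * (n * η ^ 2)) := by
  have hq : (0 : ℝ) < Fintype.card X := by exact_mod_cast Fintype.card_pos
  have hκ0 : 0 ≤ κ := by rw [hκ]; positivity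
  have hk : 1 ≤ k := by
    rcases Nat.eq_zero_or_pos k with h | h
    · rw [h] at hnk; omega
    · exact h
  have hk' : (1 : ℝ) ≤ k := by exact_mod_cast hk
  have hnk' : (n : ℝ) * k = 2 * m := by exact_mod_cast hnk
  have hm' : (0 : ℝ) < m := by exact_mod_cast hm
  set τ : ℝ := κ / (8 * k) * η with hτ
  have hτ0 : 0 ≤ τ := by positivity
  have hτk : τ * k ≤ 1 := by
    have : τ * k = κ * η / 8 := by rw [hτ]; field_simp
    rw [this]; linarith
  set t : Bool → ℝ := fun s => if s then τ else -τ with ht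
  have htabs : ∀ s, |t s| = τ := fun s => by
    rw [ht]; simp only; split_ifs <;> simp [abs_of_nonneg hτ0]
  have htsq : ∀ s, t s ^ 2 = τ ^ 2 := fun s => by rw [← sq_abs, htabs]
  have hedge : ∀ g ∈ regGraphs n k, ((edgesOf g).card : ℝ) = m := fun g hg => by
    have := two_mul_card_edgesOf (Finset.mem_filter.1 hg).2
    have : (edgesOf g).card = m := by omega
    rw [this]
  have hbound := hM.measureReal_le (J := X × X × Y' × Bool) hQ
    (fun g θ y => η < dTVedge Q g θ y)
    (fun j _ _ => Real.exp (-(t j.2.2.2) * (m * nuBarE Q j.1 j.2.1 j.2.2.1) - τ * (m * (κ * η))))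
    (fun _ _ _ => (Real.exp_pos _).le)
    (fun j θ e b => Real.exp (t j.2.2.2 *
      if (θ e.1 = j.1 ∧ θ e.2 = j.2.1) ∧ b = j.2.2.1 then 1 else 0))
    (fun _ _ _ _ => (Real.exp_pos _).le) ?_
  · refine hbound.trans ?_
    have hterm : ∀ g ∈ regGraphs n k, ∀ j : X × X × Y' × Bool,
        ((Fintype.card X : ℝ)⁻¹) ^ n * ∑ θ : Fin n → X,
          ∏ e ∈ edgesOf g, ∑ b, Q (θ e.1) (θ e.2) b * Real.exp (t j.2.2.2 *
            if (θ e.1 = j.1 ∧ θ e.2 = j.2.1) ∧ b = j.2.2.1 then 1 else 0) ≤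
        Real.exp (t j.2.2.2 * (m * nuBarE Q j.1 j.2.1 j.2.2.1) + (m + n * k ^ 2) * τ ^ 2) := by
      rintro g hg ⟨x₁, x₂, b₀, s⟩
      have hreg := (Finset.mem_filter.1 hg).2
      simp only
      set r : ℝ := t s * Q x₁ x₂ b₀ with hr
      have hQle : Q x₁ x₂ b₀ ≤ 1 := by
        rw [← hQ1 x₁ x₂]
        exact Finset.single_le_sum (fun b _ => hQ x₁ x₂ b) (Finset.mem_univ b₀)
      have hrabs : |r| ≤ τ := by
        rw [hr, abs_mul, htabs, abs_of_nonneg (hQ _ _ _)]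
        exact mul_le_of_le_one_right hτ0 hQle
      have hts : |t s| ≤ 1 := by
        rw [htabs]
        exact (le_mul_of_one_le_right hτ0 hk').trans hτk
      have hmgf := sum_exp_le_of_bounded_diff (X := X) (c := τ * k) hτk (n := n)
        (fun θ => r * ∑ e ∈ edgesOf g, if θ e.1 = x₁ ∧ θ e.2 = x₂ then (1 : ℝ) else 0)
        (fun θ θ' v hv => by
          rw [← mul_sub, abs_mul]
          exact mul_le_mul hrabs (abs_sum_pair_sub_le hreg x₁ x₂ hv) (abs_nonneg _) hτ0)
      rw [← Finset.mul_sum, mul_left_comm, sum_card_pair_eq, hedge g hg] at hmgf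
      calc _ ≤ ((Fintype.card X : ℝ)⁻¹) ^ n * ∑ θ : Fin n → X,
            Real.exp (r * ∑ e ∈ edgesOf g, if θ e.1 = x₁ ∧ θ e.2 = x₂ then (1 : ℝ) else 0) *
              Real.exp (m * τ ^ 2) := by
            gcongr with θ
            rw [Finset.mul_sum, Real.exp_sum, mul_comm (m : ℝ), ← hedge g hg, mul_comm (τ ^ 2),
              ← nsmul_eq_mul, ← Finset.sum_const, Real.exp_sum, ← Finset.prod_mul_distrib]
            refine Finset.prod_le_prod (fun e _ => Finset.sum_nonneg fun b _ =>
              mul_nonneg (hQ _ _ _) (Real.exp_pos _).le) fun e _ => ?_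
            rw [← Real.exp_add]
            by_cases he : θ e.1 = x₁ ∧ θ e.2 = x₂
            · have := sum_kernel_mul_exp_le (hQ x₁ x₂) (hQ1 x₁ x₂) hts
                (θ e.1 = x₁ ∧ θ e.2 = x₂) b₀
              rw [htsq] at this
              rw [he.1, he.2] at this ⊢
              exact this
            · have := sum_kernel_mul_exp_le (hQ (θ e.1) (θ e.2)) (hQ1 _ _) hts
                (θ e.1 = x₁ ∧ θ e.2 = x₂) b₀
              rw [htsq] at this
              refine this.trans (le_of_eq ?_)
              rw [if_neg he, mul_zero, mul_zero]
        _ = (((Fintype.card X : ℝ)⁻¹) ^ n * ∑ θ : Fin n → X,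
            Real.exp (r * ∑ e ∈ edgesOf g, if θ e.1 = x₁ ∧ θ e.2 = x₂ then (1 : ℝ) else 0)) *
              Real.exp (m * τ ^ 2) := by rw [← Finset.sum_mul, mul_assoc]
        _ ≤ Real.exp (r * (m * ((Fintype.card X : ℝ)⁻¹) ^ 2) + n * (τ * k) ^ 2) *
              Real.exp (m * τ ^ 2) := by gcongr
        _ = _ := by
            rw [← Real.exp_add, hr, nuBarE]
            congr 1
            ring
    have hexp : (m + n * k ^ 2 : ℝ) * τ ^ 2 - τ * (m * (κ * η)) ≤
        -(κ ^ 2 / 32) * (n * η ^ 2) := by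
      have h1 : (m : ℝ) = n * k / 2 := by linarith
      have h2 : τ * k = κ * η / 8 := by rw [hτ]; field_simp
      have h3 : (m : ℝ) * τ ^ 2 ≤ n * (τ * k) ^ 2 := by
        rw [h1]
        have : (0 : ℝ) ≤ n * τ ^ 2 * k := by positivity
        nlinarith
      have h4 : (n * k ^ 2 : ℝ) * τ ^ 2 = n * (τ * k) ^ 2 := by ring
      have h5 : τ * (m * (κ * η)) = n * (τ * k) * (κ * η) / 2 := by rw [h1]; ring
      rw [add_mul, h4, h5]
      rw [h2] at h3 ⊢
      nlinarith
    have hg : ∀ g ∈ regGraphs n k, ((Fintype.card X : ℝ)⁻¹) ^ n * ∑ θ : Fin n → X,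
        ∑ j : X × X × Y' × Bool,
          Real.exp (-(t j.2.2.2) * (m * nuBarE Q j.1 j.2.1 j.2.2.1) - τ * (m * (κ * η))) *
          ∏ e ∈ edgesOf g, ∑ b, Q (θ e.1) (θ e.2) b * Real.exp (t j.2.2.2 *
            if (θ e.1 = j.1 ∧ θ e.2 = j.2.1) ∧ b = j.2.2.1 then 1 else 0) ≤
        Fintype.card (X × X × Y' × Bool) * Real.exp (-(κ ^ 2 / 32) * (n * η ^ 2)) := by
      intro g hg
      rw [Finset.sum_comm, Finset.mul_sum]
      refine (Finset.sum_le_card_nsmul _ _ (Real.exp (-(κ ^ 2 / 32) * (n * η ^ 2)))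
        fun j _ => ?_).trans (le_of_eq (by rw [Finset.card_univ, nsmul_eq_mul]))
      rw [← Finset.mul_sum, mul_left_comm]
      refine (mul_le_mul_of_nonneg_left (hterm g hg j) (Real.exp_pos _).le).trans ?_
      rw [← Real.exp_add]
      refine Real.exp_le_exp.2 ((le_of_eq ?_).trans hexp)
      ring
    rw [mul_assoc, Finset.mul_sum]
    calc _ ≤ ((regGraphs n k).card : ℝ)⁻¹ * ∑ g ∈ regGraphs n k,
          Fintype.card (X × X × Y' × Bool) * Real.exp (-(κ ^ 2 / 32) * (n * η ^ 2)) := by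
          exact mul_le_mul_of_nonneg_left (Finset.sum_le_sum hg) (by positivity)
      _ ≤ _ := by
          rw [Finset.sum_const, nsmul_eq_mul, ← mul_assoc]
          exact mul_le_of_le_one_left (by positivity) (inv_mul_le_one)
  · intro g θ y hg hlt
    obtain ⟨x₁, x₂, b₀, hcell⟩ := exists_cell_of_lt_dTVedge hlt
    rw [← hκ] at hcell
    have hmg := hedge g (Finset.mem_filter.2 ⟨Finset.mem_univ _, hg⟩)
    set N : ℝ := (((edgesOf g).filter fun e => θ e.1 = x₁ ∧ θ e.2 = x₂ ∧ y e = b₀).card : ℝ)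
      with hN
    have hemp : empEdge g θ y x₁ x₂ b₀ = (m : ℝ)⁻¹ * N := by rw [empEdge, hmg]
    have hdev : m * (κ * η) < |N - m * nuBarE Q x₁ x₂ b₀| := by
      have : N - m * nuBarE Q x₁ x₂ b₀ = m * (empEdge g θ y x₁ x₂ b₀ - nuBarE Q x₁ x₂ b₀) := by
        rw [hemp]; field_simp
      rw [this, abs_mul, abs_of_pos hm']
      gcongr
    obtain ⟨s, hs⟩ : ∃ s, t s * (N - m * nuBarE Q x₁ x₂ b₀) = τ * |N - m * nuBarE Q x₁ x₂ b₀| := by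
      rcases le_total 0 (N - m * nuBarE Q x₁ x₂ b₀) with h | h
      · exact ⟨true, by simp [ht, abs_of_nonneg h]⟩
      · exact ⟨false, by
          rw [abs_of_nonpos h]
          simp only [ht, Bool.false_eq_true, if_false]
          ring⟩
    refine le_trans ?_ (Finset.single_le_sum (fun j _ => mul_nonneg (Real.exp_pos _).le
      (Finset.prod_nonneg fun e _ => (Real.exp_pos _).le)) (Finset.mem_univ (x₁, x₂, b₀, s)))
    simp only
    rw [← Real.exp_sum, ← Finset.mul_sum, ← Finset.sum_filter, Finset.sum_const, nsmul_eq_mul,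
      mul_one, ← Real.exp_add]
    simp only [and_assoc]
    rw [← hN]
    refine Real.one_le_exp ?_
    have : τ * (m * (κ * η)) ≤ τ * |N - m * nuBarE Q x₁ x₂ b₀| := by gcongr
    linarith

/-! ### Typical labellings with small overlap -/

lemma colorCount_sub_le_of_dTVvert_lt {q : ℕ} [NeZero q] {n : ℕ} {θ θ₀ : Fin n → ZMod q} {δ : ℝ}
    (h : dTVvert θ θ₀ < δ) (x : ZMod q) :
    (colorCount (θ - θ₀) x : ℝ) ≤ ((q : ℝ)⁻¹ + 2 * δ) * n := by
  have hq : (0 : ℝ) < q := by exact_mod_cast NeZero.pos q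
  rcases Nat.eq_zero_or_pos n with rfl | hn
  · simp [colorCount]
  have hn' : (0 : ℝ) < n := by exact_mod_cast hn
  have h1 : (n : ℝ)⁻¹ * colorCount (θ - θ₀) x = ∑ x₂, empVert θ θ₀ (x + x₂) x₂ := by
    simp only [empVert, ← Finset.mul_sum]
    congr 1
    rw [colorCount, Finset.card_eq_sum_card_fiberwise (f := θ₀) (t := Finset.univ)
      (fun _ _ => Finset.mem_coe.2 (Finset.mem_univ _))]
    push_cast
    refine Finset.sum_congr rfl fun x₂ _ => ?_
    congr 2
    ext u
    simp only [Finset.mem_filter, Finset.mem_univ, true_and, Pi.sub_apply]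
    refine ⟨fun ⟨h₁, h₂⟩ => ⟨by rw [← h₁, ← h₂]; abel, h₂⟩,
      fun ⟨h₁, h₂⟩ => ⟨by rw [h₁, h₂]; abel, h₂⟩⟩
  have h2 : (n : ℝ)⁻¹ * colorCount (θ - θ₀) x - (q : ℝ)⁻¹ =
      ∑ x₂ : ZMod q, (empVert θ θ₀ (x + x₂) x₂ - (q : ℝ)⁻¹ * (q : ℝ)⁻¹) := by
    rw [h1, Finset.sum_sub_distrib, Finset.sum_const, Finset.card_univ, ZMod.card, nsmul_eq_mul]
    field_simp
  have h3 : (n : ℝ)⁻¹ * colorCount (θ - θ₀) x - (q : ℝ)⁻¹ ≤ 2 * dTVvert θ θ₀ := by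
    rw [h2, dTVvert, ← mul_assoc, mul_inv_cancel₀ two_ne_zero, one_mul, ZMod.card,
      Finset.sum_comm]
    refine Finset.sum_le_sum fun x₂ _ => (le_abs_self _).trans ?_
    exact Finset.single_le_sum (f := fun x₁ => |empVert θ θ₀ x₁ x₂ - (q : ℝ)⁻¹ * (q : ℝ)⁻¹|)
      (fun _ _ => abs_nonneg _) (Finset.mem_univ (x + x₂))
  have h4 : (n : ℝ)⁻¹ * colorCount (θ - θ₀) x ≤ (q : ℝ)⁻¹ + 2 * δ := by linarith
  rwa [inv_mul_le_iff₀ hn', mul_comm] at h4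

lemma le_card_agree_of_mem_typicalSet {q : ℕ} [NeZero q] {p η : ℝ} {n : ℕ}
    {g : Fin n → Fin n → Bool} {θ : Fin n → ZMod q} {y : Fin n × Fin n → ZMod q}
    (h : θ ∈ typicalSet (Qsync q p) η g y) :
    (edgesOf g).card * (1 - p + p / q - 2 * η) ≤
      (((edgesOf g).filter fun e => y e = θ e.1 - θ e.2).card : ℝ) := by
  have hq : (0 : ℝ) < q := by exact_mod_cast NeZero.pos q
  rcases Nat.eq_zero_or_pos (edgesOf g).card with h0 | hpos
  · rw [h0]; simp
  have hpos' : (0 : ℝ) < (edgesOf g).card := by exact_mod_cast hpos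
  have h1 : ((edgesOf g).card : ℝ)⁻¹ *
      (((edgesOf g).filter fun e => y e = θ e.1 - θ e.2).card : ℝ) =
      ∑ x₁, ∑ x₂, empEdge g θ y x₁ x₂ (x₁ - x₂) := by
    simp only [empEdge, ← Finset.mul_sum]
    congr 1
    rw [← Fintype.sum_prod_type', Finset.card_eq_sum_card_fiberwise (f := fun e => (θ e.1, θ e.2))
      (t := Finset.univ) (fun _ _ => Finset.mem_coe.2 (Finset.mem_univ _))]
    push_cast
    refine Finset.sum_congr rfl fun x _ => ?_
    congr 2
    ext e
    simp only [Finset.mem_filter, Prod.ext_iff]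
    constructor
    · rintro ⟨⟨h₁, h₂⟩, h₃, h₄⟩
      exact ⟨h₁, h₃, h₄, by rw [h₂, h₃, h₄]⟩
    · rintro ⟨h₁, h₃, h₄, h₂⟩
      exact ⟨⟨h₁, by rw [h₂, h₃, h₄]⟩, h₃, h₄⟩
  have h2 : 1 - p + p / q =
      ∑ x₁ : ZMod q, ∑ x₂ : ZMod q, nuBarE (Qsync q p) x₁ x₂ (x₁ - x₂) := by
    simp only [nuBarE, Qsync, if_true, Finset.sum_const, Finset.card_univ, ZMod.card,
      nsmul_eq_mul, mul_one]
    field_simp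
  have h3 : 1 - p + p / q - ((edgesOf g).card : ℝ)⁻¹ *
      (((edgesOf g).filter fun e => y e = θ e.1 - θ e.2).card : ℝ) ≤
      2 * dTVedge (Qsync q p) g θ y := by
    rw [h1, h2, dTVedge, ← mul_assoc, mul_inv_cancel₀ two_ne_zero, one_mul,
      ← Finset.sum_sub_distrib]
    refine Finset.sum_le_sum fun x₁ _ => ?_
    rw [← Finset.sum_sub_distrib]
    refine Finset.sum_le_sum fun x₂ _ => ?_
    refine le_trans ?_ (Finset.single_le_sum
      (f := fun b => |empEdge g θ y x₁ x₂ b - nuBarE (Qsync q p) x₁ x₂ b|)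
      (fun _ _ => abs_nonneg _) (Finset.mem_univ (x₁ - x₂)))
    rw [abs_sub_comm]
    exact le_abs_self _
  have h4 : dTVedge (Qsync q p) g θ y ≤ η := h
  have h5 : 1 - p + p / q - 2 * η ≤ ((edgesOf g).card : ℝ)⁻¹ *
      (((edgesOf g).filter fun e => y e = θ e.1 - θ e.2).card : ℝ) := by linarith
  rwa [le_inv_mul_iff₀ hpos'] at h5

lemma Qsync_nonneg {q : ℕ} [NeZero q] {p : ℝ} (hp : p ∈ Set.Ioo (0 : ℝ) 1) (a b y : ZMod q) :
    0 ≤ Qsync q p a b y := by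
  have := hp.1
  have := sub_pos.2 hp.2
  rw [Qsync]
  positivity

lemma sum_Qsync {q : ℕ} [NeZero q] (p : ℝ) (a b : ZMod q) : ∑ y, Qsync q p a b y = 1 := by
  have hq : (q : ℝ) ≠ 0 := by exact_mod_cast NeZero.ne q
  simp only [Qsync, Finset.sum_add_distrib, ← Finset.mul_sum, Finset.sum_ite_eq',
    Finset.mem_univ, if_true, Finset.sum_const, Finset.card_univ, ZMod.card, nsmul_eq_mul]
  field_simp
  ring

lemma sum_Qsync_mul_ite {q : ℕ} [NeZero q] (p : ℝ) (a b c : ZMod q) (z : ℝ) :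
    ∑ y, Qsync q p a b y * (if y = c then z else 1) = 1 + (z - 1) * Qsync q p a b c := by
  have h : ∀ y, Qsync q p a b y * (if y = c then z else 1) =
      Qsync q p a b y + if y = c then (z - 1) * Qsync q p a b y else 0 := by
    intro y
    split_ifs <;> ring
  simp only [h, Finset.sum_add_distrib, sum_Qsync, Finset.sum_ite_eq', Finset.mem_univ, if_true]

/-- The denominator of the threshold `kstar`. -/
def infoRate (p : ℝ) (q : ℕ) : ℝ :=
  (1 - p + p / q) * Real.log (p + q * (1 - p)) + (1 - 1 / (q : ℝ)) * p * Real.log p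

lemma RegSpace.IsRegModel.measureReal_exists_typical_le {q : ℕ} [NeZero q] {p : ℝ}
    (hp : p ∈ Set.Ioo (0 : ℝ) 1) {n k m : ℕ} (hm : 3 ≤ m) (hnk : n * k = 2 * m)
    (hN : 3 * k + 2 * (k * k) + 4 * (k + k * k) < 2 * m)
    {M : RegSpace (ZMod q) (ZMod q) n} (hM : M.IsRegModel (Qsync q p) k) {η δ : ℝ}
    (hδ : 0 ≤ δ) :
    M.P.real {ω | ∃ θ ∈ typicalSet (Qsync q p) η (M.G ω) (fun e => M.Yobs e ω),
        dTVvert θ (M.θ0 ω) < δ} ≤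
      polyLoss k q m * Real.exp (n * Real.log q - m * infoRate p q +
        2 * m * (η * (Real.log (p + q * (1 - p)) - Real.log p)) + 4 * m * (q * δ)) := by
  obtain ⟨hp0, hp1⟩ := hp
  have hq0 : (0 : ℝ) < q := by exact_mod_cast NeZero.pos q
  have hq1 : (1 : ℝ) ≤ q := by exact_mod_cast NeZero.pos q
  set w : ℝ := p + q * (1 - p) with hw
  have hw1 : p ≤ w := by rw [hw]; nlinarith
  have hw0 : 0 < w := hp0.trans_le hw1
  set z : ℝ := w / p with hz
  have hz1 : 1 ≤ z := by rw [hz, le_div_iff₀ hp0]; linarith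
  have hz0 : 0 < z := by linarith
  have hlogz : Real.log z = Real.log w - Real.log p := Real.log_div hw0.ne' hp0.ne'
  set s : ℝ := 1 - p + p / q - 2 * η with hs
  set ρ : ℝ := (q : ℝ)⁻¹ + 2 * δ with hρ
  have hρ0 : 0 ≤ ρ := by positivity
  set A : ℝ := 1 + (z - 1) * (1 - p + p / q) with hA
  set B : ℝ := 1 + (z - 1) * (p / q) with hB
  have hA0 : 0 ≤ A := by
    have : 0 ≤ (z - 1) * (1 - p + p / q) :=
      mul_nonneg (by linarith) (add_nonneg (by linarith) (by positivity))
    linarith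
  have hB0 : 0 ≤ B := by
    have : 0 ≤ (z - 1) * (p / q) := mul_nonneg (by linarith) (by positivity)
    linarith
  have hAB : ρ ^ 2 * (q * (A + (q - 1) * B)) = (1 + 2 * (q * δ)) ^ 2 / p := by
    rw [hA, hB, hz, hw, hρ]
    field_simp
    ring
  have hedge : ∀ g, IsRegAdj n k g → ((edgesOf g).card : ℝ) = m := fun g hg => by
    have := two_mul_card_edgesOf hg
    have : (edgesOf g).card = m := by omega
    rw [this]
  have hbound := hM.measureReal_le (J := Fin n → ZMod q) (Qsync_nonneg ⟨hp0, hp1⟩)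
    (fun g θ₀ y => ∃ θ ∈ typicalSet (Qsync q p) η g y, dTVvert θ θ₀ < δ)
    (fun θ _ θ₀ => if ∀ x, (colorCount (θ - θ₀) x : ℝ) ≤ ρ * n then
      Real.exp (-(m * s * Real.log z)) else 0)
    (fun _ _ _ => by split_ifs <;> positivity)
    (fun θ _ e b => if b = θ e.1 - θ e.2 then z else 1)
    (fun _ _ _ _ => by split_ifs <;> positivity) ?_
  · refine hbound.trans ?_
    have hinner : ∀ θ θ₀ : Fin n → ZMod q, ∀ e : Fin n × Fin n,
        ∑ b, Qsync q p (θ₀ e.1) (θ₀ e.2) b * (if b = θ e.1 - θ e.2 then z else 1) =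
          if (θ - θ₀) e.1 = (θ - θ₀) e.2 then A else B := by
      intro θ θ₀ e
      rw [sum_Qsync_mul_ite, Qsync]
      have : θ e.1 - θ e.2 = θ₀ e.1 - θ₀ e.2 ↔ (θ - θ₀) e.1 = (θ - θ₀) e.2 := by
        simp only [Pi.sub_apply]
        rw [sub_eq_sub_iff_sub_eq_sub]
      simp only [this]
      split_ifs <;> simp [hA, hB]
    simp only [hinner, ZMod.card]
    set D : ℝ := Real.exp (-(m * s * Real.log z)) with hD
    set T : ℝ := (regGraphs n k).card * polyLoss k q m * ((1 + 2 * (q * δ)) ^ 2 / p) ^ m with hT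
    have hpoly : 0 ≤ polyLoss k q m := by rw [polyLoss]; positivity
    have hT0 : 0 ≤ T := by positivity
    have hterm : ∀ θ θ₀ : Fin n → ZMod q, ∑ g ∈ regGraphs n k,
        (if ∀ x, (colorCount (θ - θ₀) x : ℝ) ≤ ρ * n then D else 0) *
          ∏ e ∈ edgesOf g, (if (θ - θ₀) e.1 = (θ - θ₀) e.2 then A else B) ≤ D * T := by
      intro θ θ₀
      rw [← Finset.mul_sum]
      split_ifs with hbal
      · have := sum_regGraphs_prod_le_of_balanced hm hnk hN (θ - θ₀) hρ0 hbal hA0 hB0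
        rw [ZMod.card, hAB] at this
        refine mul_le_mul_of_nonneg_left ?_ (Real.exp_pos _).le
        refine le_trans (le_of_eq ?_) this
        congr!
      · rw [zero_mul]
        positivity
    have hswap : ∑ g ∈ regGraphs n k, ∑ θ₀ : Fin n → ZMod q, ∑ θ : Fin n → ZMod q,
        (if ∀ x, (colorCount (θ - θ₀) x : ℝ) ≤ ρ * n then D else 0) *
          ∏ e ∈ edgesOf g, (if (θ - θ₀) e.1 = (θ - θ₀) e.2 then A else B) ≤
        (q : ℝ) ^ n * ((q : ℝ) ^ n * (D * T)) := by
      rw [Finset.sum_comm]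
      have hc : ((Finset.univ : Finset (Fin n → ZMod q)).card : ℝ) = (q : ℝ) ^ n := by
        rw [Finset.card_univ, Fintype.card_fun, ZMod.card, Fintype.card_fin]
        push_cast
        rfl
      rw [← hc, ← nsmul_eq_mul, ← nsmul_eq_mul]
      refine Finset.sum_le_card_nsmul _ _ _ fun θ₀ _ => ?_
      rw [Finset.sum_comm]
      exact Finset.sum_le_card_nsmul _ _ _ fun θ _ => hterm θ θ₀
    have hfinal : (q : ℝ) ^ n * (D * ((1 + 2 * (q * δ)) ^ 2 / p) ^ m) ≤
        Real.exp (n * Real.log q - m * infoRate p q +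
          2 * m * (η * (Real.log w - Real.log p)) + 4 * m * (q * δ)) := by
      have h1 : (q : ℝ) ^ n = Real.exp (n * Real.log q) := by
        rw [Real.exp_nat_mul, Real.exp_log hq0]
      have h2 : ((1 + 2 * (q * δ)) ^ 2 / p) ^ m ≤
          Real.exp (m * (4 * (q * δ) - Real.log p)) := by
        rw [Real.exp_nat_mul, Real.exp_sub, Real.exp_log hp0]
        have h3 : 1 + 2 * (q * δ) ≤ Real.exp (2 * (q * δ)) := by
          linarith [Real.add_one_le_exp (2 * (q * δ))]
        have h4 : (1 + 2 * (q * δ)) ^ 2 ≤ Real.exp (4 * (q * δ)) := by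
          have : (4 * (q * δ) : ℝ) = (2 : ℕ) * (2 * (q * δ)) := by push_cast; ring
          rw [this, Real.exp_nat_mul]
          gcongr
        gcongr
      rw [h1, hD]
      calc _ ≤ Real.exp (n * Real.log q) * (Real.exp (-(m * s * Real.log z)) *
            Real.exp (m * (4 * (q * δ) - Real.log p))) := by gcongr
        _ = _ := by
          rw [← Real.exp_add, ← Real.exp_add, hlogz, hs, infoRate, ← hw]
          congr 1
          field_simp
          ring
    calc _ ≤ ((regGraphs n k).card : ℝ)⁻¹ * ((q : ℝ)⁻¹) ^ n *
          ((q : ℝ) ^ n * ((q : ℝ) ^ n * (D * T))) := by gcongr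
      _ = (((regGraphs n k).card : ℝ)⁻¹ * (regGraphs n k).card) * (polyLoss k q m *
          ((q : ℝ) ^ n * (D * ((1 + 2 * (q * δ)) ^ 2 / p) ^ m))) := by
          rw [hT, inv_pow]
          field_simp
      _ ≤ 1 * (polyLoss k q m * Real.exp (n * Real.log q - m * infoRate p q +
          2 * m * (η * (Real.log w - Real.log p)) + 4 * m * (q * δ))) := by
          gcongr
          exact inv_mul_le_one
      _ = _ := one_mul _
  · rintro g θ₀ y hg ⟨θ, hθ, hlt⟩
    refine le_trans ?_ (Finset.single_le_sum (fun j _ => mul_nonneg ?_ (Finset.prod_nonneg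
      fun e _ => ?_)) (Finset.mem_univ θ))
    · rw [if_pos (colorCount_sub_le_of_dTVvert_lt hlt), Finset.prod_ite, Finset.prod_const,
        Finset.prod_const_one, mul_one]
      have h1 := le_card_agree_of_mem_typicalSet hθ
      rw [hedge g hg, ← hs] at h1
      set N := ((edgesOf g).filter fun e => y e = θ e.1 - θ e.2).card
      have h2 : z ^ N = Real.exp (N * Real.log z) := by
        rw [Real.exp_nat_mul, Real.exp_log hz0]
      rw [h2, ← Real.exp_add]
      refine Real.one_le_exp ?_
      have := mul_le_mul_of_nonneg_right h1 (Real.log_nonneg hz1)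
      linarith
    · split_ifs <;> positivity
    · split_ifs <;> positivity

/-! ### The threshold -/

lemma infoRate_pos {q : ℕ} (hq : 2 ≤ q) {p : ℝ} (hp : p ∈ Set.Ioo (0 : ℝ) 1) :
    0 < infoRate p q := by
  obtain ⟨hp0, hp1⟩ := hp
  have hq2 : (2 : ℝ) ≤ q := by exact_mod_cast hq
  have hq0 : (0 : ℝ) < q := by linarith
  set w : ℝ := p + q * (1 - p) with hw
  have hw1 : 1 < w := by rw [hw]; nlinarith
  have hw0 : 0 < w := by linarith
  have ha : 1 - p + p / q = w / q := by rw [hw]; field_simp; ring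
  have h1 : 1 - w⁻¹ < Real.log w := by
    have := Real.log_lt_sub_one_of_pos (inv_pos.2 hw0) (inv_lt_one_of_one_lt₀ hw1).ne
    rw [Real.log_inv] at this
    linarith
  have h2 : 1 - p⁻¹ ≤ Real.log p := Real.one_sub_inv_le_log_of_pos hp0
  have h3 : w / q * (1 - w⁻¹) + (1 - 1 / (q : ℝ)) * p * (1 - p⁻¹) = 0 := by
    rw [hw]
    rw [hw] at hw0
    field_simp
    ring
  have h4 : (0 : ℝ) ≤ (1 - 1 / (q : ℝ)) * p := by
    refine mul_nonneg (sub_nonneg.2 ?_) hp0.le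
    rw [div_le_one hq0]
    linarith
  rw [infoRate, ha, ← hw]
  have h5 := mul_lt_mul_of_pos_left h1 (div_pos hw0 hq0)
  have h6 := mul_le_mul_of_nonneg_left h2 h4
  linarith

lemma abs_one_add_mul_log_sub_le {x : ℝ} (hx : |x| ≤ 1 / 2) :
    |(1 + x) * Real.log (1 + x) - (x + x ^ 2 / 2)| ≤ 4 * |x| ^ 3 := by
  have h1 := Real.abs_log_sub_add_sum_range_le (x := -x) (by rw [abs_neg]; linarith) 2
  rw [abs_neg, sub_neg_eq_add] at h1
  simp only [Finset.sum_range_succ, Finset.sum_range_zero] at h1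
  set E := 0 + (-x) ^ (0 + 1) / ((0 : ℕ) + 1 : ℝ) + (-x) ^ (1 + 1) / ((1 : ℕ) + 1 : ℝ) +
    Real.log (1 + x) with hE
  have hE2 : |E| ≤ 2 * |x| ^ 3 := by
    refine h1.trans ?_
    rw [div_le_iff₀ (by linarith)]
    have h2 : |x| ^ 3 * |x| ≤ |x| ^ 3 * (1 / 2) := by gcongr
    rw [show 2 + 1 = 3 from rfl]
    nlinarith
  have h3 : (1 + x) * Real.log (1 + x) - (x + x ^ 2 / 2) = (1 + x) * E + -(x ^ 3 / 2) := by
    rw [hE]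
    push_cast
    ring
  have h4 : |1 + x| ≤ 3 / 2 := by
    rw [abs_le] at hx ⊢
    constructor <;> linarith
  rw [h3]
  calc _ ≤ |(1 + x) * E| + |-(x ^ 3 / 2)| := abs_add_le _ _
    _ = |1 + x| * |E| + |x| ^ 3 / 2 := by
        rw [abs_mul, abs_neg, abs_div, abs_pow, abs_of_pos (zero_lt_two' ℝ)]
    _ ≤ 3 / 2 * (2 * |x| ^ 3) + |x| ^ 3 / 2 := by gcongr
    _ ≤ _ := by
        have : 0 ≤ |x| ^ 3 := by positivity
        linarith

lemma abs_infoRate_sub_le {q : ℕ} (hq : 2 ≤ q) {s : ℝ} (hs : 0 ≤ s)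
    (hs1 : ((q : ℝ) - 1) * s ≤ 1 / 2) :
    |infoRate (1 - s) q - ((q : ℝ) - 1) * s ^ 2 / 2| ≤ 8 * ((q : ℝ) - 1) ^ 3 * s ^ 3 := by
  have hq2 : (2 : ℝ) ≤ q := by exact_mod_cast hq
  have hq0 : (0 : ℝ) < q := by linarith
  set r : ℝ := q - 1 with hr
  have hr1 : 1 ≤ r := by rw [hr]; linarith
  have hqr : (q : ℝ) = r + 1 := by rw [hr]; ring
  have hsr : s ≤ r * s := le_mul_of_one_le_left hs hr1
  have hrs0 : 0 ≤ r * s := hs.trans hsr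
  have h1 := abs_one_add_mul_log_sub_le (x := r * s) (by
    rwa [abs_of_nonneg hrs0])
  have h2 := abs_one_add_mul_log_sub_le (x := -s) (by
    rw [abs_neg, abs_of_nonneg hs]; linarith)
  rw [abs_of_nonneg hrs0] at h1
  rw [abs_neg, abs_of_nonneg hs, ← sub_eq_add_neg] at h2
  have h3 : infoRate (1 - s) q - r * s ^ 2 / 2 =
      (q : ℝ)⁻¹ * (((1 + r * s) * Real.log (1 + r * s) - (r * s + (r * s) ^ 2 / 2)) +
        r * ((1 - s) * Real.log (1 - s) - (-s + (-s) ^ 2 / 2))) := by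
    have h4 : (1 - s) + q * (1 - (1 - s)) = 1 + r * s := by rw [hr]; ring
    rw [infoRate, h4, hqr]
    rw [hqr] at hq0
    field_simp
    ring
  rw [h3, abs_mul, abs_of_pos (inv_pos.2 hq0)]
  have hr3 : r ≤ r ^ 3 := le_self_pow₀ hr1 (by norm_num)
  calc _ ≤ 1 * (4 * (r * s) ^ 3 + r * (4 * s ^ 3)) := by
        gcongr
        · exact inv_le_one_of_one_le₀ (by linarith)
        · refine (abs_add_le _ _).trans (add_le_add h1 ?_)
          rw [abs_mul, abs_of_pos (by linarith)]
          gcongr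
    _ ≤ 1 * (4 * (r * s) ^ 3 + r ^ 3 * (4 * s ^ 3)) := by gcongr
    _ = _ := by ring

lemma exists_abs_kstar_sub_le {q : ℕ} (hq : 2 ≤ q) :
    ∃ C : ℝ, 0 < C ∧ ∃ p₀ ∈ Set.Ioo (0:ℝ) 1, ∀ p ∈ Set.Ioo p₀ (1:ℝ),
      |kstar p q - 4 * Real.log q / (((q : ℝ) - 1) * (1 - p) ^ 2)| ≤ C / (1 - p) := by
  have hq2 : (2 : ℝ) ≤ q := by exact_mod_cast hq
  have hL : 0 < Real.log q := Real.log_pos (by linarith)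
  set r : ℝ := q - 1 with hr
  have hr1 : 1 ≤ r := by rw [hr]; linarith
  have hr0 : 0 < r := by linarith
  have hr2 : 1 ≤ r ^ 2 := one_le_pow₀ hr1
  have hs0 : 1 / (32 * r ^ 2) ≤ 1 / 32 := by
    rw [div_le_div_iff₀ (by positivity) (by norm_num)]
    linarith
  refine ⟨128 * Real.log q * r, by positivity, 1 - 1 / (32 * r ^ 2), ⟨by linarith, ?_⟩, ?_⟩
  · have : 0 < 1 / (32 * r ^ 2) := by positivity
    linarith
  rintro p ⟨hp0, hp1⟩
  obtain ⟨s, rfl⟩ : ∃ s, p = 1 - s := ⟨1 - p, by ring⟩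
  have hs : 0 < s := by linarith
  have hs1 : s * (32 * r ^ 2) ≤ 1 := by
    rw [← le_div_iff₀ (by positivity)]
    linarith
  have hrs : r * s ≤ 1 / 2 := by nlinarith
  have h1 := abs_infoRate_sub_le hq hs.le hrs
  rw [← hr] at h1
  rw [sub_sub_cancel]
  set I := infoRate (1 - s) q with hI
  set J := r * s ^ 2 / 2 with hJ
  have hJ0 : 0 < J := by positivity
  have hIJ : J / 2 ≤ I := by
    have h2 : 8 * r ^ 3 * s ^ 3 ≤ J / 2 := by
      rw [hJ]
      have : 0 ≤ r * s ^ 2 := by positivity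
      nlinarith
    linarith [(abs_le.1 h1).1]
  have hI0 : 0 < I := by linarith
  have hk : kstar (1 - s) q - 4 * Real.log q / (r * s ^ 2) =
      2 * Real.log q * ((J - I) / (I * J)) := by
    have : kstar (1 - s) q = 2 * Real.log q / I := rfl
    rw [this]
    have h4 : 4 * Real.log q / (r * s ^ 2) = 2 * Real.log q / J := by
      rw [hJ]
      field_simp
      norm_num
    rw [h4]
    field_simp
  rw [hk, abs_mul, abs_of_pos (by positivity), abs_div, abs_sub_comm, abs_of_pos (mul_pos hI0 hJ0)]
  calc _ ≤ 2 * Real.log q * (8 * r ^ 3 * s ^ 3 / (J / 2 * J)) := by gcongr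
    _ = _ := by
        rw [hJ]
        field_simp
        norm_num

/-! ### Conclusion -/

lemma eventually_log_sq_le {ε : ℝ} (hε : 0 < ε) :
    ∀ᶠ n : ℕ in atTop, Real.log n ^ 2 ≤ ε * n := by
  filter_upwards [tendsto_natCast_atTop_atTop.eventually
    ((Real.isLittleO_pow_log_id_atTop (n := 2)).bound hε)] with n hn
  simpa [abs_of_nonneg (sq_nonneg (Real.log n))] using hn

lemma ηseq_nonneg (n : ℕ) : 0 ≤ ηseq n :=
  div_nonneg (Real.log_natCast_nonneg n) (Real.sqrt_nonneg _)

lemma mul_ηseq_sq {n : ℕ} (hn : 0 < n) : n * ηseq n ^ 2 = Real.log n ^ 2 := by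
  have : (0 : ℝ) < n := by exact_mod_cast hn
  rw [ηseq, div_pow, Real.sq_sqrt this.le]
  field_simp

lemma eventually_ηseq_le {ε : ℝ} (hε : 0 < ε) : ∀ᶠ n : ℕ in atTop, ηseq n ≤ ε := by
  filter_upwards [eventually_log_sq_le (pow_pos hε 2), eventually_gt_atTop 0] with n hn hn0
  rw [← mul_ηseq_sq hn0, mul_comm] at hn
  have : (0 : ℝ) < n := by exact_mod_cast hn0
  exact (sq_le_sq₀ (ηseq_nonneg n) hε.le).1 (le_of_mul_le_mul_right hn this)

lemma exists_polyLoss_le {k : ℕ} (hk : 0 < k) (q : ℕ) {b : ℝ} (hb : 0 < b) :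
    ∃ C : ℝ, 0 < C ∧ ∀ n m : ℕ, n * k = 2 * m → polyLoss k q m ≤ C * Real.exp (b * n) := by
  have hk' : (0 : ℝ) < k := by exact_mod_cast hk
  set N := 2 * (k + k * k) with hN
  set ε := b / k with hε
  have hε0 : 0 < ε := by positivity
  set D := 2 * N + q with hD
  refine ⟨2 * Real.exp 1 ^ q * (D.factorial / ε ^ D * Real.exp ε), by positivity, ?_⟩
  intro n m hnm
  set x : ℝ := 2 * m with hx
  have hx0 : 0 ≤ x := by positivity
  have hxn : ε * x = b * n := by
    have : (n : ℝ) * k = x := by rw [hx]; exact_mod_cast hnm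
    rw [← this, hε]
    field_simp
  have h1 : (x + 1) ^ D ≤ D.factorial / ε ^ D * Real.exp ε * Real.exp (b * n) := by
    have h := Real.pow_div_factorial_le_exp (ε * (x + 1)) (by positivity) D
    rw [div_le_iff₀ (by positivity), mul_pow, mul_add, mul_one, Real.exp_add, hxn] at h
    calc (x + 1) ^ D = ε ^ D * (x + 1) ^ D / ε ^ D := by field_simp
      _ ≤ Real.exp (b * n) * Real.exp ε * D.factorial / ε ^ D := by gcongr
      _ = _ := by ring
  calc polyLoss k q m = 2 * (1 + x ^ 2) ^ N * (Real.exp 1 * (x + 1)) ^ q := rfl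
    _ ≤ 2 * ((x + 1) ^ 2) ^ N * (Real.exp 1 * (x + 1)) ^ q := by
        gcongr
        nlinarith
    _ = 2 * Real.exp 1 ^ q * (x + 1) ^ D := by
        rw [mul_pow, ← pow_mul, hD, pow_add]
        ring
    _ ≤ 2 * Real.exp 1 ^ q * (D.factorial / ε ^ D * Real.exp ε * Real.exp (b * n)) := by gcongr
    _ = _ := by ring

lemma exists_const_of_eventually {K c : ℝ} (hK : 0 < K) (hc : 0 < c) (n₀ : ℕ) :
    ∃ c₀ : ℝ, 0 < c₀ ∧ ∀ (n : ℕ) (r : ℝ), 0 ≤ r →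
      (n₀ ≤ n → 1 - K * Real.exp (-c * Real.log n ^ 2) ≤ r) →
      1 - c₀⁻¹ * Real.exp (-c₀ * Real.log n ^ 2) ≤ r := by
  set L := Real.log n₀ ^ 2 with hL
  set c₀ := min (min c K⁻¹) (min 1 (Real.exp (-L))) with hc₀
  have hc₀pos : 0 < c₀ := lt_min (lt_min hc (inv_pos.2 hK)) (lt_min one_pos (Real.exp_pos _))
  have h1 : c₀ ≤ c := (min_le_left _ _).trans (min_le_left _ _)
  have h2 : c₀ ≤ K⁻¹ := (min_le_left _ _).trans (min_le_right _ _)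
  have h3 : c₀ ≤ 1 := (min_le_right _ _).trans (min_le_left _ _)
  have h4 : c₀ ≤ Real.exp (-L) := (min_le_right _ _).trans (min_le_right _ _)
  refine ⟨c₀, hc₀pos, fun n r hr h => ?_⟩
  rcases le_or_gt n₀ n with hn | hn
  · refine le_trans ?_ (h hn)
    have h5 : K ≤ c₀⁻¹ := by rwa [le_inv_comm₀ hK hc₀pos]
    have h6 : -c * Real.log n ^ 2 ≤ -c₀ * Real.log n ^ 2 := by
      have := mul_le_mul_of_nonneg_right h1 (sq_nonneg (Real.log n))
      linarith
    have : K * Real.exp (-c * Real.log n ^ 2) ≤ c₀⁻¹ * Real.exp (-c₀ * Real.log n ^ 2) := by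
      gcongr
    linarith
  · refine le_trans ?_ hr
    rw [sub_nonpos, inv_mul_eq_div, one_le_div hc₀pos]
    refine h4.trans (Real.exp_le_exp.2 ?_)
    have h5 : Real.log n ^ 2 ≤ L := by
      rcases Nat.eq_zero_or_pos n with rfl | hn0
      · simp [hL, sq_nonneg]
      · have : Real.log n ≤ Real.log n₀ :=
          Real.log_le_log (by exact_mod_cast hn0) (by exact_mod_cast hn.le)
        exact pow_le_pow_left₀ (Real.log_natCast_nonneg n) this 2
    have h6 : c₀ * Real.log n ^ 2 ≤ 1 * Real.log n ^ 2 := by gcongr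
    linarith

lemma exists_overlap_bound {q : ℕ} [NeZero q] (hq : 2 ≤ q) {k : ℕ} (hk : 3 ≤ k) {p : ℝ}
    (hp : p ∈ Set.Ioo (0 : ℝ) 1) (hkp : kstar p q < k) :
    ∃ δ : ℝ, 0 < δ ∧ ∃ c₀ : ℝ, 0 < c₀ ∧
      ∀ n : ℕ, Even (n * k) →
      ∀ M : RegSpace (ZMod q) (ZMod q) n, M.IsRegModel (Qsync q p) k →
      ∀ θhat : M.Ω → Fin n → ZMod q, IsTypEstimator (Qsync q p) M θhat →
        1 - c₀⁻¹ * Real.exp (-c₀ * (Real.log n) ^ 2) ≤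
          (M.P {ω | δ ≤ dTVvert (θhat ω) (M.θ0 ω)}).toReal := by
  have hq0 : (0 : ℝ) < q := by exact_mod_cast NeZero.pos q
  have hk0 : (0 : ℝ) < k := by exact_mod_cast (by omega : 0 < k)
  have hI := infoRate_pos hq hp
  set I := infoRate p q with hIdef
  set γ := (k * I - 2 * Real.log q) / 2 with hγ
  have hγ0 : 0 < γ := by
    have h : 2 * Real.log q / I < k := hkp
    rw [div_lt_iff₀ hI] at h
    rw [hγ]
    linarith
  set l := Real.log (p + q * (1 - p)) - Real.log p with hl
  set δ := γ / (6 * (k * q)) with hδ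
  have hδ0 : 0 < δ := by positivity
  set κ : ℝ := 2 / ((Fintype.card (ZMod q) : ℝ) ^ 2 * Fintype.card (ZMod q)) with hκ
  have hκ0 : 0 < κ := by rw [hκ, ZMod.card]; positivity
  obtain ⟨C, hC0, hC⟩ := exists_polyLoss_le (by omega : 0 < k) q (b := γ / 6) (by positivity)
  have hev : ∀ᶠ n : ℕ in atTop, 6 * k + 8 ≤ n ∧ ηseq n ≤ 8 / κ ∧
      ηseq n ≤ γ / (3 * (k * (|l| + 1))) ∧ Real.log n ^ 2 ≤ γ / 6 * n := by
    filter_upwards [eventually_ge_atTop (6 * k + 8), eventually_ηseq_le (by positivity : 0 < 8 / κ),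
      eventually_ηseq_le (by positivity : 0 < γ / (3 * (k * (|l| + 1)))),
      eventually_log_sq_le (by positivity : 0 < γ / 6)] with n h1 h2 h3 h4
    exact ⟨h1, h2, h3, h4⟩
  obtain ⟨n₀, hn₀⟩ := eventually_atTop.1 hev
  set S : ℝ := (Fintype.card (ZMod q × ZMod q × ZMod q × Bool) : ℝ) with hS
  set c := min (κ ^ 2 / 32) 1 with hc
  have hc0 : 0 < c := lt_min (by positivity) one_pos
  obtain ⟨c₀, hc₀, hconst⟩ := exists_const_of_eventually (K := S + C) (by positivity) hc0 n₀
  refine ⟨δ, hδ0, c₀, hc₀, fun n hnk M hM θhat hθ => hconst n _ ENNReal.toReal_nonneg fun hn => ?_⟩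
  obtain ⟨hnk', hη8, hηl, hlog⟩ := hn₀ n hn
  obtain ⟨m, hm⟩ := hnk
  have hm2 : n * k = 2 * m := by omega
  have hnkk : 6 * (k * k) + 8 * k ≤ 2 * m := by
    rw [← hm2]
    calc 6 * (k * k) + 8 * k = (6 * k + 8) * k := by ring
      _ ≤ n * k := Nat.mul_le_mul_right k hnk'
  have hm3 : 3 ≤ m := by nlinarith
  have hN : 3 * k + 2 * (k * k) + 4 * (k + k * k) < 2 * m := by linarith
  have hmr : (n : ℝ) * k = 2 * m := by exact_mod_cast hm2
  have hn0 : (0 : ℝ) ≤ n := Nat.cast_nonneg n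
  have := hM.1
  have hbad₁ := hM.measureReal_lt_dTVedge_le (Qsync_nonneg hp) (sum_Qsync p)
    (by omega : 0 < m) hm2 (ηseq_nonneg n) hκ (by rwa [le_div_iff₀' hκ0] at hη8)
  rw [mul_ηseq_sq (by omega : 0 < n), ← hS] at hbad₁
  have hbad₂ := hM.measureReal_exists_typical_le hp hm3 hm2 hN (η := ηseq n) hδ0.le
  rw [← hIdef, ← hl] at hbad₂
  have hexp : n * Real.log q - m * I + 2 * m * (ηseq n * l) + 4 * m * (q * δ) ≤
      -(γ / 3) * n := by
    have h1 : (m : ℝ) = n * k / 2 := by linarith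
    have h2 : k * (ηseq n * l) ≤ γ / 3 := by
      have h3 : l ≤ |l| + 1 := (le_abs_self l).trans (by linarith)
      calc k * (ηseq n * l) ≤ k * (γ / (3 * (k * (|l| + 1))) * (|l| + 1)) := by
            refine mul_le_mul_of_nonneg_left ?_ hk0.le
            exact (mul_le_mul_of_nonneg_left h3 (ηseq_nonneg n)).trans
              (mul_le_mul_of_nonneg_right hηl (by positivity))
        _ = γ / 3 := by field_simp
    have h4 : k * (q * δ) = γ / 6 := by rw [hδ]; field_simp
    have h5 : n * Real.log q - m * I + 2 * m * (ηseq n * l) + 4 * m * (q * δ) =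
        n * (-γ + k * (ηseq n * l) + 2 * (k * (q * δ))) := by rw [h1, hγ]; ring
    rw [h5, h4, mul_comm]
    exact mul_le_mul_of_nonneg_right (by linarith) hn0
  have hbad₂' : M.P.real {ω | ∃ θ ∈ typicalSet (Qsync q p) (ηseq n) (M.G ω)
      (fun e => M.Yobs e ω), dTVvert θ (M.θ0 ω) < δ} ≤ C * Real.exp (-c * Real.log n ^ 2) := by
    refine hbad₂.trans ?_
    calc _ ≤ C * Real.exp (γ / 6 * n) * Real.exp (-(γ / 3) * n) := by
          gcongr
          exact hC n m hm2
      _ = C * Real.exp (-(γ / 6 * n)) := by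
          rw [mul_assoc, ← Real.exp_add]
          congr 2
          ring
      _ ≤ _ := by
          gcongr
          have : c * Real.log n ^ 2 ≤ 1 * Real.log n ^ 2 := by
            gcongr
            exact min_le_right _ _
          linarith
  have hbad₁' : M.P.real {ω | ηseq n < dTVedge (Qsync q p) (M.G ω) (M.θ0 ω)
      (fun e => M.Yobs e ω)} ≤ S * Real.exp (-c * Real.log n ^ 2) := by
    refine hbad₁.trans ?_
    have : c * Real.log n ^ 2 ≤ κ ^ 2 / 32 * Real.log n ^ 2 := by
      gcongr
      exact min_le_left _ _
    exact mul_le_mul_of_nonneg_left (Real.exp_le_exp.2 (by linarith)) (by positivity)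
  have hcover : (Set.univ : Set M.Ω) ⊆ {ω | δ ≤ dTVvert (θhat ω) (M.θ0 ω)} ∪
      ({ω | ηseq n < dTVedge (Qsync q p) (M.G ω) (M.θ0 ω) (fun e => M.Yobs e ω)} ∪
        {ω | ∃ θ ∈ typicalSet (Qsync q p) (ηseq n) (M.G ω) (fun e => M.Yobs e ω),
          dTVvert θ (M.θ0 ω) < δ}) := by
    intro ω _
    by_cases h₁ : δ ≤ dTVvert (θhat ω) (M.θ0 ω)
    · exact Or.inl h₁
    by_cases h₂ : ηseq n < dTVedge (Qsync q p) (M.G ω) (M.θ0 ω) (fun e => M.Yobs e ω)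
    · exact Or.inr (Or.inl h₂)
    · exact Or.inr (Or.inr ⟨θhat ω, hθ.2 ω ⟨M.θ0 ω, not_lt.1 h₂⟩, not_le.1 h₁⟩)
  have hone : (1 : ℝ) ≤ M.P.real {ω | δ ≤ dTVvert (θhat ω) (M.θ0 ω)} +
      (S * Real.exp (-c * Real.log n ^ 2) + C * Real.exp (-c * Real.log n ^ 2)) := by
    calc (1 : ℝ) = M.P.real Set.univ := probReal_univ.symm
      _ ≤ _ := measureReal_mono hcover
      _ ≤ _ := measureReal_union_le _ _
      _ ≤ _ := add_le_add_right (measureReal_union_le _ _) _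
      _ ≤ _ := add_le_add_right (add_le_add hbad₁' hbad₂') _
  rw [← measureReal_def]
  linarith

/-- Corollary for ℤ_q-synchronization: above k_*(p;q), typical
estimators are non-trivially correlated with the truth w.h.p.; and the asymptotic
expansion of k_*(p;q) as p → 1. -/
theorem statement_12
    (q : ℕ) [NeZero q] (hq : 2 ≤ q) (k : ℕ) (hk : 3 ≤ k) :
    (∀ p ∈ Set.Ioo (0:ℝ) 1, kstar p q < (k : ℝ) →
      ∃ δ : ℝ, 0 < δ ∧ ∃ c₀ : ℝ, 0 < c₀ ∧
        ∀ n : ℕ, Even (n * k) →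
        ∀ M : RegSpace (ZMod q) (ZMod q) n, M.IsRegModel (Qsync q p) k →
        ∀ θhat : M.Ω → Fin n → ZMod q, IsTypEstimator (Qsync q p) M θhat →
          1 - c₀⁻¹ * Real.exp (-c₀ * (Real.log n) ^ 2) ≤
            (M.P {ω | δ ≤ dTVvert (θhat ω) (M.θ0 ω)}).toReal) ∧
    (∃ C : ℝ, 0 < C ∧ ∃ p₀ ∈ Set.Ioo (0:ℝ) 1, ∀ p ∈ Set.Ioo p₀ (1:ℝ),
      |kstar p q - 4 * Real.log q / (((q : ℝ) - 1) * (1 - p) ^ 2)| ≤ C / (1 - p)) := by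
  exact ⟨fun _ hp hkp => exists_overlap_bound hq hk hp hkp, exists_abs_kstar_sub_le hq⟩

end
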